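/- arXiv:2007.08079 — 4 statements merged into one kernel-verified Lean document; each statement's English description precedes it below -/
import Mathlib

section
/- Let E₁ and E₂ be ellipsoids in ℝⁿ, n ≥ 2, centered at the origin, with semiaxes a₁,…,aₙ > 0 and b₁,…,bₙ > 0 respectively. If Ṽ_i(E₁) = Ṽ_i(E₂) for every integer i = 1, 2, …, n, then E₁ and E₂ are congruent; equivalently, the multisets {a₁,…,aₙ} and {b₁,…,bₙ} coincide. -/
open MeasureTheory Real Set

/-- The spherical Lebesgue measure on the unit sphere `S^{n-1} ⊆ ℝⁿ`. -/
noncomputable def sphereMeasure (n : ℕ) :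
    Measure (Metric.sphere (0 : EuclideanSpace ℝ (Fin n)) 1) :=
  (volume : Measure (EuclideanSpace ℝ (Fin n))).toSphere

/-- The radial function of a set `K`, evaluated at `x`:
`ρ_K(x) = max {t ≥ 0 : t • x ∈ K}`. -/
noncomputable def radial {n : ℕ} (K : Set (EuclideanSpace ℝ (Fin n)))
    (x : EuclideanSpace ℝ (Fin n)) : ℝ :=
  sSup {t : ℝ | 0 ≤ t ∧ t • x ∈ K}

/-- The `i`-th dual volume `Ṽ_i(K) = (1/n) ∫_{S^{n-1}} ρ_K(θ)^i dθ`. -/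
noncomputable def dualVolume (n : ℕ) (i : ℝ) (K : Set (EuclideanSpace ℝ (Fin n))) : ℝ :=
  (1 / n) * ∫ θ : Metric.sphere (0 : EuclideanSpace ℝ (Fin n)) 1,
    radial K (θ : EuclideanSpace ℝ (Fin n)) ^ i ∂(sphereMeasure n)

/-- The axis-parallel centered ellipsoid with semiaxes `a`:
`{x : x₁²/a₁² + ⋯ + xₙ²/aₙ² ≤ 1}`. -/
def ellipsoidSet {n : ℕ} (a : Fin n → ℝ) : Set (EuclideanSpace ℝ (Fin n)) :=
  {x | ∑ j, (x j) ^ 2 / (a j) ^ 2 ≤ 1}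

/-- The rotated quadratic form `∑ c_j (T⁻¹ x)_j²`. -/
noncomputable def qf {n : ℕ} (c : Fin n → ℝ)
    (T : EuclideanSpace ℝ (Fin n) ≃ₗᵢ[ℝ] EuclideanSpace ℝ (Fin n))
    (x : EuclideanSpace ℝ (Fin n)) : ℝ := ∑ j, c j * (T.symm x j) ^ 2

lemma qf_continuous {n : ℕ} (c : Fin n → ℝ)
    (T : EuclideanSpace ℝ (Fin n) ≃ₗᵢ[ℝ] EuclideanSpace ℝ (Fin n)) : Continuous (qf c T) := by
  unfold qf
  refine continuous_finsetSum _ fun j _ => ?_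
  refine continuous_const.mul (Continuous.pow ?_ 2)
  exact (PiLp.continuous_apply 2 _ j).comp T.symm.continuous

lemma qf_smul {n : ℕ} (c : Fin n → ℝ)
    (T : EuclideanSpace ℝ (Fin n) ≃ₗᵢ[ℝ] EuclideanSpace ℝ (Fin n)) (r : ℝ) (x) :
    qf c T (r • x) = r ^ 2 * qf c T x := by
  simp only [qf, map_smul, PiLp.smul_apply, smul_eq_mul, Finset.mul_sum]
  refine Finset.sum_congr rfl fun j _ => ?_
  ring

lemma qf_one {n : ℕ}
    (T : EuclideanSpace ℝ (Fin n) ≃ₗᵢ[ℝ] EuclideanSpace ℝ (Fin n)) (x) :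
    qf (fun _ => 1) T x = ‖x‖ ^ 2 := by
  rw [← T.symm.norm_map x, EuclideanSpace.norm_sq_eq]
  simp [qf]

lemma qf_add {n : ℕ} (c : Fin n → ℝ)
    (T : EuclideanSpace ℝ (Fin n) ≃ₗᵢ[ℝ] EuclideanSpace ℝ (Fin n)) (s : ℝ)
    (x : Metric.sphere (0 : EuclideanSpace ℝ (Fin n)) 1) :
    qf (fun j => 1 + s ^ 2 * c j) T x = 1 + s ^ 2 * qf c T x := by
  have h := qf_one T (x : EuclideanSpace ℝ (Fin n))
  rw [norm_eq_of_mem_sphere x] at h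
  simp only [one_pow] at h
  nth_rewrite 3 [← h]
  simp only [qf, Finset.mul_sum, ← Finset.sum_add_distrib]
  refine Finset.sum_congr rfl fun j _ => ?_
  ring

lemma qf_pos {n : ℕ} (c : Fin n → ℝ) (hc : ∀ j, 0 < c j)
    (T : EuclideanSpace ℝ (Fin n) ≃ₗᵢ[ℝ] EuclideanSpace ℝ (Fin n))
    (x : EuclideanSpace ℝ (Fin n)) (hx : x ≠ 0) : 0 < qf c T x := by
  unfold qf
  have h : T.symm x ≠ 0 := by simpa using hx
  obtain ⟨j, hj⟩ : ∃ j, T.symm x j ≠ 0 := by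
    by_contra! h'
    exact h (by ext j; simpa using h' j)
  refine Finset.sum_pos' (fun i _ => by have := hc i; positivity) ⟨j, Finset.mem_univ _, ?_⟩
  have := hc j
  positivity

lemma sphere_ne {n : ℕ} (x : Metric.sphere (0 : EuclideanSpace ℝ (Fin n)) 1) :
    (x : EuclideanSpace ℝ (Fin n)) ≠ 0 := ne_zero_of_mem_unit_sphere x

lemma scaling (k : ℕ) (f : ℝ → ℝ) {b : ℝ} (hb : 0 < b) :
    ∫ r in Ioi (0 : ℝ), r ^ k * f (b * r) = (b⁻¹) ^ (k + 1) * ∫ u in Ioi (0 : ℝ), u ^ k * f u := by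
  have := integral_comp_mul_left_Ioi (fun u => u ^ k * f u) 0 hb
  simp only [mul_zero, smul_eq_mul, mul_pow, mul_assoc, integral_const_mul] at this
  rw [pow_succ, mul_assoc, ← this, ← mul_assoc, ← mul_pow, inv_mul_cancel₀ hb.ne']
  simp

lemma gauss_integrable {n : ℕ} (c : Fin n → ℝ) (hc : ∀ j, 0 < c j)
    (T : EuclideanSpace ℝ (Fin n) ≃ₗᵢ[ℝ] EuclideanSpace ℝ (Fin n)) :
    Integrable (fun x => Real.exp (-qf c T x)) := by
  have h1 : Integrable (fun y : Fin n → ℝ => ∏ j, Real.exp (-c j * y j ^ 2)) :=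
    Integrable.fintype_prod (f := fun j (v : ℝ) => Real.exp (-c j * v ^ 2))
      fun j => integrable_exp_neg_mul_sq (hc j)
  have h2 := (EuclideanSpace.volume_preserving_symm_measurableEquiv_toLp (Fin n)).integrable_comp_of_integrable h1
  have h3 := (T.symm.measurePreserving).integrable_comp_of_integrable h2
  refine h3.congr (Filter.Eventually.of_forall fun x => ?_)
  simp [qf, ← Real.exp_sum, Function.comp_def]

lemma gauss_integral {n : ℕ} (c : Fin n → ℝ)
    (T : EuclideanSpace ℝ (Fin n) ≃ₗᵢ[ℝ] EuclideanSpace ℝ (Fin n)) :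
    ∫ x, Real.exp (-qf c T x) = √π ^ n * ∏ j, (√(c j))⁻¹ := by
  have h1 := integral_fintype_prod_volume_eq_prod (fun (j : Fin n) (v : ℝ) => Real.exp (-c j * v ^ 2))
  have h2 := (EuclideanSpace.volume_preserving_symm_measurableEquiv_toLp (Fin n)).integral_comp'
    (fun y : Fin n → ℝ => ∏ j, Real.exp (-c j * y j ^ 2))
  have h3 := (T.symm.measurePreserving).integral_comp T.symm.toHomeomorph.measurableEmbedding
    (fun x : EuclideanSpace ℝ (Fin n) => ∏ j, Real.exp (-c j * x j ^ 2))
  have h4 : ∀ x, Real.exp (-qf c T x) = ∏ j, Real.exp (-c j * (T.symm x j) ^ 2) := by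
    intro x
    simp [qf, ← Real.exp_sum]
  simp only [h4]
  rw [h3]
  refine h2.trans ?_
  rw [h1]
  simp only [integral_gaussian, Real.sqrt_div pi_pos.le]
  simp [div_eq_mul_inv, Finset.prod_mul_distrib]

lemma polar {n : ℕ} (hn : 1 ≤ n) (g : EuclideanSpace ℝ (Fin n) → ℝ) (hg : Integrable g) :
    ∫ x, g x = ∫ θ : Metric.sphere (0 : EuclideanSpace ℝ (Fin n)) 1,
      ∫ r in Ioi (0 : ℝ), r ^ (n - 1) * g (r • (θ : EuclideanSpace ℝ (Fin n))) ∂volume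
        ∂(sphereMeasure n) := by
  set μ : Measure (EuclideanSpace ℝ (Fin n)) := volume
  have hmp := μ.measurePreserving_homeomorphUnitSphereProd
  let G : Metric.sphere (0 : EuclideanSpace ℝ (Fin n)) 1 × Ioi (0 : ℝ) → ℝ :=
    fun p => g (p.2.1 • (p.1 : EuclideanSpace ℝ (Fin n)))
  have hG : ∀ x : ({0}ᶜ : Set (EuclideanSpace ℝ (Fin n))),
      G (homeomorphUnitSphereProd _ x) = g x := by
    intro x
    have hx : ‖(x : EuclideanSpace ℝ (Fin n))‖ ≠ 0 := norm_ne_zero_iff.2 x.2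
    simp [G, smul_smul, hx]
  have hInt : Integrable G (μ.toSphere.prod
      (Measure.volumeIoiPow (Module.finrank ℝ (EuclideanSpace ℝ (Fin n)) - 1))) := by
    rw [← hmp.integrable_comp_emb (Homeomorph.measurableEmbedding _)]
    simp only [Function.comp_def, hG]
    have := (integrableOn_iff_comap_subtypeVal (f := g) (μ := μ)
      (s := ({0}ᶜ : Set (EuclideanSpace ℝ (Fin n)))) (by measurability)).1 hg.integrableOn
    exact this
  calc ∫ x, g x ∂μ = ∫ x : ({(0)}ᶜ : Set (EuclideanSpace ℝ (Fin n))), g x ∂(μ.comap (↑)) := by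
        have : Nonempty (Fin n) := ⟨⟨0, hn⟩⟩
        rw [integral_subtype_comap (measurableSet_singleton _).compl g,
          restrict_compl_singleton]
    _ = ∫ p, G p ∂(μ.toSphere.prod
      (Measure.volumeIoiPow (Module.finrank ℝ (EuclideanSpace ℝ (Fin n)) - 1))) := by
        rw [← hmp.integral_comp (Homeomorph.measurableEmbedding _)]
        simp only [hG]
    _ = _ := by
        rw [integral_prod _ hInt]
        refine integral_congr_ae (Filter.Eventually.of_forall fun θ => ?_)
        simp only [Measure.volumeIoiPow, ENNReal.ofReal, G]
        rw [integral_withDensity_eq_integral_smul, 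
          integral_subtype_comap measurableSet_Ioi
            fun a : ℝ ↦ Real.toNNReal (a ^ (Module.finrank ℝ (EuclideanSpace ℝ (Fin n)) - 1)) •
              g (a • (θ : EuclideanSpace ℝ (Fin n))),
          setIntegral_congr_fun measurableSet_Ioi fun x hx ↦ ?_]
        · simp only [finrank_euclideanSpace_fin]
          rw [NNReal.smul_def, Real.coe_toNNReal _ (pow_nonneg hx.out.le _), smul_eq_mul]
        · exact (measurable_subtype_coe.pow_const _).real_toNNReal

lemma gauss {n : ℕ} (hn : 1 ≤ n) (c : Fin n → ℝ) (hc : ∀ j, 0 < c j)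
    (T : EuclideanSpace ℝ (Fin n) ≃ₗᵢ[ℝ] EuclideanSpace ℝ (Fin n)) :
    (∫ θ : Metric.sphere (0 : EuclideanSpace ℝ (Fin n)) 1, ((√(qf c T θ))⁻¹) ^ n ∂(sphereMeasure n))
      * (∫ u in Ioi (0 : ℝ), u ^ (n - 1) * Real.exp (-u ^ 2)) =
      √π ^ n * ∏ j, (√(c j))⁻¹ := by
  rw [← gauss_integral c T, polar hn _ (gauss_integrable c hc T), ← integral_mul_const]
  refine integral_congr_ae (Filter.Eventually.of_forall fun θ => ?_)
  have hq := qf_pos c hc T θ (sphere_ne θ)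
  have := scaling (n - 1) (fun u => Real.exp (-u ^ 2)) (Real.sqrt_pos.2 hq)
  simp only [mul_pow, Real.sq_sqrt hq.le] at this
  rw [Nat.sub_add_cancel hn] at this
  simp only [qf_smul]
  rw [← this]
  simp only [mul_comm]

instance (n : ℕ) : IsFiniteMeasure (sphereMeasure n) := by
  unfold sphereMeasure; infer_instance

lemma moment_integrable {n : ℕ} (c : Fin n → ℝ) (hc : ∀ j, 0 < c j)
    (T : EuclideanSpace ℝ (Fin n) ≃ₗᵢ[ℝ] EuclideanSpace ℝ (Fin n)) (k : ℕ) (hk : k + 2 ≤ n) :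
    Integrable (fun p : Metric.sphere (0 : EuclideanSpace ℝ (Fin n)) 1 × ℝ =>
      p.2 ^ k * ((√(1 + p.2 ^ 2 * qf c T p.1))⁻¹) ^ n)
      ((sphereMeasure n).prod (volume.restrict (Ioi 0))) := by
  have : Nonempty (Fin n) := ⟨⟨0, by omega⟩⟩
  obtain ⟨m, hm0, hm1, hmc⟩ : ∃ m : ℝ, 0 < m ∧ m ≤ 1 ∧ ∀ j, m ≤ c j := by
    obtain ⟨j0, hj0⟩ := Finite.exists_min c
    exact ⟨min 1 (c j0), lt_min one_pos (hc j0), min_le_left _ _,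
      fun j => (min_le_right _ _).trans (hj0 j)⟩
  have hmq : ∀ θ : Metric.sphere (0 : EuclideanSpace ℝ (Fin n)) 1, m ≤ qf c T θ := by
    intro θ
    have h := qf_one T (θ : EuclideanSpace ℝ (Fin n))
    rw [norm_eq_of_mem_sphere θ] at h
    calc m = m * qf (fun _ => 1) T θ := by rw [h]; ring
      _ ≤ qf c T θ := by
        simp only [qf, Finset.mul_sum, one_mul]
        exact Finset.sum_le_sum fun j _ => mul_le_mul_of_nonneg_right (hmc j) (sq_nonneg _)
  have hb : Integrable (fun p : Metric.sphere (0 : EuclideanSpace ℝ (Fin n)) 1 × ℝ =>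
      ((√m)⁻¹) ^ n * (1 + p.2 ^ 2)⁻¹) ((sphereMeasure n).prod (volume.restrict (Ioi 0))) := by
    have := (integrable_inv_one_add_sq.restrict (s := Ioi (0 : ℝ))).const_mul (((√m)⁻¹) ^ n)
    exact this.comp_snd (sphereMeasure n)
  refine hb.mono' ?_ (Filter.Eventually.of_forall fun p => ?_)
  · have := (qf_continuous c T).measurable
    apply Measurable.aestronglyMeasurable
    have h2 : Measurable (fun p : Metric.sphere (0 : EuclideanSpace ℝ (Fin n)) 1 × ℝ =>
      qf c T p.1) := this.comp (measurable_subtype_coe.comp measurable_fst)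
    fun_prop
  · obtain ⟨θ, s⟩ := p
    have hq := hmq θ
    dsimp only
    set q := qf c T θ
    have h1 : √m * √(1 + s ^ 2) ≤ √(1 + s ^ 2 * q) := by
      rw [← Real.sqrt_mul hm0.le]
      apply Real.sqrt_le_sqrt
      nlinarith [sq_nonneg s, mul_le_mul_of_nonneg_left hq (sq_nonneg s)]
    have hw : 1 ≤ √(1 + s ^ 2) := Real.one_le_sqrt.2 (by nlinarith [sq_nonneg s])
    have hs : |s| ≤ √(1 + s ^ 2) := Real.abs_le_sqrt (by linarith)
    have hw2 : 1 + s ^ 2 = √(1 + s ^ 2) ^ 2 := (Real.sq_sqrt (by positivity)).symm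
    have hmm : 0 < √m := Real.sqrt_pos.2 hm0
    rw [norm_mul, norm_pow, norm_pow, norm_inv, Real.norm_eq_abs, Real.norm_eq_abs,
      abs_of_nonneg (Real.sqrt_nonneg _)]
    rw [hw2]
    set w := √(1 + s ^ 2)
    have hw0 : 0 < w := by linarith
    try rw [← hw2]
    rw [hw2]
    calc |s| ^ k * (√(1 + s ^ 2 * q))⁻¹ ^ n ≤ w ^ k * (√m * w)⁻¹ ^ n := by
          gcongr
      _ = (√m)⁻¹ ^ n * (w ^ k * w⁻¹ ^ n) := by rw [mul_inv, mul_pow]; ring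
      _ ≤ (√m)⁻¹ ^ n * (w ^ 2)⁻¹ := by
          gcongr
          rw [inv_pow, ← div_eq_mul_inv, div_le_iff₀ (by positivity), ← div_eq_inv_mul,
            le_div_iff₀ (by positivity), ← pow_add]
          exact pow_le_pow_right₀ hw hk

lemma moment {n : ℕ} (c : Fin n → ℝ) (hc : ∀ j, 0 < c j)
    (T : EuclideanSpace ℝ (Fin n) ≃ₗᵢ[ℝ] EuclideanSpace ℝ (Fin n)) (k : ℕ) (hk : k + 2 ≤ n) :
    IntegrableOn (fun s : ℝ => s ^ k * ∏ j, (√(1 + s ^ 2 * c j))⁻¹) (Ioi 0) ∧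
    √π ^ n * ∫ s in Ioi (0 : ℝ), s ^ k * ∏ j, (√(1 + s ^ 2 * c j))⁻¹ =
      (∫ θ : Metric.sphere (0 : EuclideanSpace ℝ (Fin n)) 1, ((√(qf c T θ))⁻¹) ^ (k + 1)
        ∂(sphereMeasure n)) *
      (∫ u in Ioi (0 : ℝ), u ^ k * ((√(1 + u ^ 2))⁻¹) ^ n) *
      (∫ u in Ioi (0 : ℝ), u ^ (n - 1) * Real.exp (-u ^ 2)) := by
  have hI := moment_integrable c hc T k hk
  have hpi : (√π ^ n) ≠ 0 := by positivity
  set K := ∫ u in Ioi (0 : ℝ), u ^ (n - 1) * Real.exp (-u ^ 2) with hK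
  have key : ∀ s : ℝ, (∫ θ : Metric.sphere (0 : EuclideanSpace ℝ (Fin n)) 1,
      s ^ k * ((√(1 + s ^ 2 * qf c T θ))⁻¹) ^ n ∂(sphereMeasure n)) * K =
      √π ^ n * (s ^ k * ∏ j, (√(1 + s ^ 2 * c j))⁻¹) := by
    intro s
    have := gauss (by omega) (fun j => 1 + s ^ 2 * c j)
      (fun j => by have := hc j; positivity) T
    simp only [qf_add] at this
    rw [integral_const_mul, mul_assoc, this]
    ring
  have hInt := hI.integral_prod_right.mul_const K
  simp only [key] at hInt
  constructor
  · have := hInt.const_mul ((√π ^ n)⁻¹)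
    simp only [← mul_assoc, inv_mul_cancel₀ hpi, one_mul] at this
    exact this
  · rw [← integral_const_mul]
    simp only [← key]
    rw [integral_mul_const, ← integral_integral_swap hI, 
      ← integral_mul_const (∫ u in Ioi (0 : ℝ), u ^ k * ((√(1 + u ^ 2))⁻¹) ^ n)]
    congr 1
    refine integral_congr_ae (Filter.Eventually.of_forall fun θ => ?_)
    have hq := qf_pos c hc T θ (sphere_ne θ)
    have := scaling k (fun u => ((√(1 + u ^ 2))⁻¹) ^ n) (Real.sqrt_pos.2 hq)
    simp only [mul_pow, Real.sq_sqrt hq.le] at this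
    dsimp only
    rw [← this]
    simp only [mul_comm (qf c T _)]

lemma radial_ellipsoid {n : ℕ} (a : Fin n → ℝ) (ha : ∀ j, 0 < a j)
    (T : EuclideanSpace ℝ (Fin n) ≃ₗᵢ[ℝ] EuclideanSpace ℝ (Fin n))
    (θ : Metric.sphere (0 : EuclideanSpace ℝ (Fin n)) 1) :
    radial (T '' ellipsoidSet a) θ = (√(qf (fun j => (a j ^ 2)⁻¹) T θ))⁻¹ := by
  have hq := qf_pos (fun j => (a j ^ 2)⁻¹) (fun j => by have := ha j; positivity) T θ (sphere_ne θ)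
  have hmem : ∀ x, x ∈ T '' ellipsoidSet a ↔ qf (fun j => (a j ^ 2)⁻¹) T x ≤ 1 := by
    intro x
    rw [show (T '' ellipsoidSet a) = T.symm ⁻¹' ellipsoidSet a from
      T.toEquiv.image_eq_preimage_symm _]
    simp [ellipsoidSet, qf, div_eq_inv_mul]
  unfold radial
  simp only [hmem, qf_smul]
  set q := qf (fun j => (a j ^ 2)⁻¹) T θ
  have hs : 0 < √q := Real.sqrt_pos.2 hq
  have : {t : ℝ | 0 ≤ t ∧ t ^ 2 * q ≤ 1} = Icc 0 (√q)⁻¹ := by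
    ext t
    simp only [mem_ofPred_eq, mem_Icc, and_congr_right_iff]
    intro ht
    rw [← one_div, le_div_iff₀ hs, ← Real.sq_sqrt hq.le, ← mul_pow, Real.sqrt_sq hs.le,
      sq_le_one_iff₀ (by positivity)]
  rw [this, csSup_Icc (by positivity)]

lemma dualVolume_ellipsoid {n : ℕ} (a : Fin n → ℝ) (ha : ∀ j, 0 < a j)
    (T : EuclideanSpace ℝ (Fin n) ≃ₗᵢ[ℝ] EuclideanSpace ℝ (Fin n)) (i : ℕ) :
    dualVolume n (i : ℝ) (T '' ellipsoidSet a) =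
      (1 / n) * ∫ θ : Metric.sphere (0 : EuclideanSpace ℝ (Fin n)) 1,
        ((√(qf (fun j => (a j ^ 2)⁻¹) T θ))⁻¹) ^ i ∂(sphereMeasure n) := by
  unfold dualVolume
  simp only [radial_ellipsoid a ha T, Real.rpow_natCast]

open Polynomial in
lemma sign_poly : ∀ (d : ℕ) (R : ℝ[X]), R ≠ 0 → R.natDegree = d →
    ∃ P : ℝ[X], P ≠ 0 ∧ P.natDegree ≤ d ∧ ∀ s : ℝ, 0 < s → 0 ≤ P.eval s * R.eval (s ^ 2) := by
  intro d
  induction d with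
  | zero =>
    intro R hR hd
    rw [natDegree_eq_zero] at hd
    obtain ⟨x, rfl⟩ := hd
    refine ⟨C x, hR, by simp, fun s _ => by simpa using mul_self_nonneg x⟩
  | succ d ih =>
    intro R hR hd
    by_cases h : ∃ r : ℝ, 0 < r ∧ R.IsRoot r
    · obtain ⟨r, hr, hroot⟩ := h
      obtain ⟨Q, rfl⟩ := dvd_iff_isRoot.2 hroot
      have hQ : Q ≠ 0 := right_ne_zero_of_mul hR
      rw [natDegree_mul (X_sub_C_ne_zero r) hQ, natDegree_X_sub_C] at hd
      obtain ⟨P, hP, hPd, hPs⟩ := ih Q hQ (by omega)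
      refine ⟨(X - C (√r)) * P, mul_ne_zero (X_sub_C_ne_zero _) hP, ?_, fun s hs => ?_⟩
      · rw [natDegree_mul (X_sub_C_ne_zero _) hP, natDegree_X_sub_C]; omega
      · have h1 := hPs s hs
        have h2 : s ^ 2 - r = (s - √r) * (s + √r) := by
          nth_rewrite 1 [← Real.sq_sqrt hr.le]; ring
        simp only [eval_mul, eval_sub, eval_X, eval_C]
        rw [h2]
        have h3 : 0 ≤ (s - √r) ^ 2 * (s + √r) := by positivity
        calc 0 ≤ ((s - √r) ^ 2 * (s + √r)) * (eval s P * eval (s ^ 2) Q) := mul_nonneg h3 h1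
          _ = _ := by ring
    · push Not at h
      refine ⟨C (R.eval 1), ?_, by simp, fun s hs => ?_⟩
      · simpa using h 1 one_pos
      · rw [eval_C]
        by_contra! hneg
        have hpc : IsPreconnected ((fun t => R.eval t) '' Ioi (0 : ℝ)) :=
          isPreconnected_Ioi.image _ R.continuous.continuousOn
        have hoc := hpc.ordConnected
        have m1 : R.eval 1 ∈ (fun t => R.eval t) '' Ioi (0 : ℝ) := ⟨1, mem_Ioi.2 one_pos, rfl⟩
        have m2 : R.eval (s ^ 2) ∈ (fun t => R.eval t) '' Ioi (0 : ℝ) :=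
          ⟨s ^ 2, mem_Ioi.2 (pow_pos hs 2), rfl⟩
        have m0 : (0 : ℝ) ∈ (fun t => R.eval t) '' Ioi (0 : ℝ) := by
          rcases mul_neg_iff.1 hneg with ⟨h1, h2⟩ | ⟨h1, h2⟩
          · exact hoc.out m2 m1 ⟨h2.le, h1.le⟩
          · exact hoc.out m1 m2 ⟨h1.le, h2.le⟩
        obtain ⟨t, ht, ht0⟩ := m0
        exact h t ht ht0

lemma prod_inv_sqrt {n : ℕ} (a : Fin n → ℝ) (ha : ∀ j, 0 < a j) (s : ℝ) :
    ∏ j, (√(1 + s ^ 2 * (a j ^ 2)⁻¹))⁻¹ = (∏ j, a j) * (√(∏ j, (s ^ 2 + a j ^ 2)))⁻¹ := by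
  rw [Real.sqrt_prod _ (fun j _ => by positivity), ← Finset.prod_inv_distrib,
    ← Finset.prod_mul_distrib]
  refine Finset.prod_congr rfl fun j _ => ?_
  have := ha j
  rw [show 1 + s ^ 2 * (a j ^ 2)⁻¹ = (s ^ 2 + a j ^ 2) / a j ^ 2 by field_simp; ring,
    Real.sqrt_div (by positivity), Real.sqrt_sq this.le, inv_div, div_eq_mul_inv]

open Polynomial in
lemma core {n : ℕ} (a b : Fin n → ℝ) (ha : ∀ j, 0 < a j) (hb : ∀ j, 0 < b j)
    (hprod : ∏ j, a j = ∏ j, b j)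
    (hIa : ∀ k, k + 2 ≤ n →
      IntegrableOn (fun s : ℝ => s ^ k * ∏ j, (√(1 + s ^ 2 * (a j ^ 2)⁻¹))⁻¹) (Ioi 0))
    (hIb : ∀ k, k + 2 ≤ n →
      IntegrableOn (fun s : ℝ => s ^ k * ∏ j, (√(1 + s ^ 2 * (b j ^ 2)⁻¹))⁻¹) (Ioi 0))
    (h : ∀ k, k + 2 ≤ n →
      ∫ s in Ioi (0 : ℝ), s ^ k * ∏ j, (√(1 + s ^ 2 * (a j ^ 2)⁻¹))⁻¹ =
      ∫ s in Ioi (0 : ℝ), s ^ k * ∏ j, (√(1 + s ^ 2 * (b j ^ 2)⁻¹))⁻¹) :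
    (∏ j, (X + C (a j ^ 2)) : ℝ[X]) = ∏ j, (X + C (b j ^ 2)) := by
  by_contra hne
  set A : ℝ[X] := ∏ j, (X + C (a j ^ 2)) with hA
  set B : ℝ[X] := ∏ j, (X + C (b j ^ 2)) with hB
  have hAm : A.Monic := monic_prod_of_monic _ _ fun j _ => monic_X_add_C _
  have hBm : B.Monic := monic_prod_of_monic _ _ fun j _ => monic_X_add_C _
  have hAd : A.degree = n := by
    rw [hA, degree_prod, Finset.sum_congr rfl fun j _ => degree_X_add_C _]; simp
  have hBd : B.degree = n := by
    rw [hB, degree_prod, Finset.sum_congr rfl fun j _ => degree_X_add_C _]; simp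
  have hR0 : B - A ≠ 0 := sub_ne_zero.2 (Ne.symm hne)
  have hRd : (B - A).degree < n := by
    rw [← hBd]
    exact degree_sub_lt_left (by rw [hAd, hBd]) hBm.ne_zero (by rw [hAm.leadingCoeff, hBm.leadingCoeff])
  have hAe : ∀ t, A.eval t = ∏ j, (t + a j ^ 2) := by intro t; simp [hA, eval_prod]
  have hBe : ∀ t, B.eval t = ∏ j, (t + b j ^ 2) := by intro t; simp [hB, eval_prod]
  have hroot : X ∣ (B - A) := by
    rw [X_dvd_iff, coeff_zero_eq_eval_zero, eval_sub, hAe, hBe]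
    simp [Finset.prod_pow, hprod]
  obtain ⟨R, hR⟩ := hroot
  have hRne : R ≠ 0 := by rintro rfl; simp at hR; exact hR0 hR
  have hRn : R.natDegree + 2 ≤ n := by
    have h1 : (B - A).natDegree < n := (natDegree_lt_iff_degree_lt hR0).2 hRd
    rw [hR, natDegree_mul X_ne_zero hRne, natDegree_X] at h1
    omega
  obtain ⟨P, hP0, hPd, hPs⟩ := sign_poly _ R hRne rfl
  set Fa : ℝ → ℝ := fun s => ∏ j, (√(1 + s ^ 2 * (a j ^ 2)⁻¹))⁻¹ with hFa
  set Fb : ℝ → ℝ := fun s => ∏ j, (√(1 + s ^ 2 * (b j ^ 2)⁻¹))⁻¹ with hFb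
  have hPe : ∀ s, P.eval s = ∑ k ∈ Finset.range (n - 1), P.coeff k * s ^ k := by
    intro s
    exact eval_eq_sum_range' (by omega) s
  have hexp : ∀ s, P.eval s * (Fa s - Fb s) =
      ∑ k ∈ Finset.range (n - 1), P.coeff k * (s ^ k * Fa s - s ^ k * Fb s) := by
    intro s
    rw [hPe, Finset.sum_mul]
    exact Finset.sum_congr rfl fun k _ => by ring
  have hik : ∀ k ∈ Finset.range (n - 1), Integrable
      (fun s => P.coeff k * (s ^ k * Fa s - s ^ k * Fb s)) (volume.restrict (Ioi 0)) := by
    intro k hk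
    have hk : k + 2 ≤ n := by have := Finset.mem_range.1 hk; omega
    exact (Integrable.sub (hIa k hk) (hIb k hk)).const_mul _
  have hInt : Integrable (fun s => P.eval s * (Fa s - Fb s)) (volume.restrict (Ioi 0)) := by
    simp only [hexp]
    exact integrable_finsetSum _ hik
  have hzero : ∫ s in Ioi (0 : ℝ), P.eval s * (Fa s - Fb s) = 0 := by
    simp only [hexp]
    rw [integral_finsetSum _ hik]
    refine Finset.sum_eq_zero fun k hk => ?_
    have hk : k + 2 ≤ n := by have := Finset.mem_range.1 hk; omega
    rw [integral_const_mul, integral_sub (hIa k hk) (hIb k hk), h k hk, sub_self, mul_zero]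
  have hpp : 0 < ∏ j, b j := Finset.prod_pos fun j _ => hb j
  have hpt : ∀ s : ℝ, 0 < s → 0 ≤ P.eval s * (Fa s - Fb s) ∧
      (P.eval s * (Fa s - Fb s) = 0 → P.eval s * R.eval (s ^ 2) = 0) := by
    intro s hs
    have e1 : Fa s = (∏ j, b j) * (√(A.eval (s ^ 2)))⁻¹ := by
      simp only [hFa]; rw [prod_inv_sqrt a ha, hAe, hprod]
    have e2 : Fb s = (∏ j, b j) * (√(B.eval (s ^ 2)))⁻¹ := by
      simp only [hFb]; rw [prod_inv_sqrt b hb, hBe]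
    have pA : 0 < A.eval (s ^ 2) := by
      rw [hAe]; exact Finset.prod_pos fun j _ => by positivity
    have pB : 0 < B.eval (s ^ 2) := by
      rw [hBe]; exact Finset.prod_pos fun j _ => by positivity
    have hd : B.eval (s ^ 2) - A.eval (s ^ 2) = s ^ 2 * R.eval (s ^ 2) := by
      rw [← eval_sub, hR]; simp
    have hs2 : 0 < s ^ 2 := by positivity
    have hsg := hPs s hs
    rw [e1, e2, ← mul_sub]
    set α := A.eval (s ^ 2)
    set β := B.eval (s ^ 2)
    set ρ := R.eval (s ^ 2)
    set p := P.eval s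
    constructor
    · rcases lt_trichotomy p 0 with hp | hp | hp
      · have h1 : ρ ≤ 0 := by by_contra! hh; nlinarith
        have h2 : β ≤ α := by nlinarith
        have h3 : (√α)⁻¹ ≤ (√β)⁻¹ :=
          inv_anti₀ (Real.sqrt_pos.2 pB) (Real.sqrt_le_sqrt h2)
        exact mul_nonneg_of_nonpos_of_nonpos hp.le
          (mul_nonpos_of_nonneg_of_nonpos hpp.le (by linarith))
      · simp [hp]
      · have h1 : 0 ≤ ρ := by by_contra! hh; nlinarith
        have h2 : α ≤ β := by nlinarith
        have h3 : (√β)⁻¹ ≤ (√α)⁻¹ :=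
          inv_anti₀ (Real.sqrt_pos.2 pA) (Real.sqrt_le_sqrt h2)
        exact mul_nonneg hp.le (mul_nonneg hpp.le (by linarith))
    · intro h0
      rcases mul_eq_zero.1 h0 with h1 | h1
      · simp [h1]
      · have h2 := (mul_eq_zero.1 h1).resolve_left hpp.ne'
        have h3 : √α = √β := inv_injective (sub_eq_zero.1 h2)
        have h4 : α = β := (Real.sqrt_inj pA.le pB.le).1 h3
        have h5 : s ^ 2 * ρ = 0 := by rw [← hd, h4, sub_self]
        rw [(mul_eq_zero.1 h5).resolve_left hs2.ne', mul_zero]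
  have hae := (setIntegral_eq_zero_iff_of_nonneg_ae
    ((ae_restrict_iff' measurableSet_Ioi).2
      (Filter.Eventually.of_forall fun s hs => (hpt s hs).1)) hInt).1 hzero
  set W : ℝ[X] := P * R.comp (X ^ 2) with hW
  have hW0 : W ≠ 0 := by
    refine mul_ne_zero hP0 ?_
    intro hc
    rw [comp_eq_zero_iff] at hc
    rcases hc with hc | ⟨_, hc⟩
    · exact hRne hc
    · have := congrArg natDegree hc
      simp at this
  have hfin : volume {s | W.IsRoot s} = 0 := (finite_setOfPred_isRoot hW0).measure_zero _
  have h1 : ∀ᵐ s ∂(volume.restrict (Ioi (0 : ℝ))), ¬ W.IsRoot s :=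
    ae_restrict_of_ae (by rw [ae_iff]; simpa using hfin)
  have h2 : ∀ᵐ s ∂(volume.restrict (Ioi (0 : ℝ))), False := by
    filter_upwards [h1, hae, ae_restrict_mem measurableSet_Ioi] with s hs1 hs2 hs3
    apply hs1
    have := (hpt s hs3).2 hs2
    simpa [hW, IsRoot.def, eval_comp] using this
  rw [ae_iff] at h2
  simp at h2

lemma perm_of_poly {n : ℕ} (a b : Fin n → ℝ) (ha : ∀ j, 0 < a j) (hb : ∀ j, 0 < b j)
    (h : (∏ j, (Polynomial.X + Polynomial.C (a j ^ 2)) : Polynomial ℝ) =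
      ∏ j, (Polynomial.X + Polynomial.C (b j ^ 2))) :
    ∃ σ : Equiv.Perm (Fin n), ∀ j, b j = a (σ j) := by
  have key : ∀ c : Fin n → ℝ, (∀ j, 0 < c j) →
      ((∏ j, (Polynomial.X + Polynomial.C (c j ^ 2)) : Polynomial ℝ).roots.map
        fun x => √(-x)) = Finset.univ.val.map c := by
    intro c hc
    have : (∏ j, (Polynomial.X + Polynomial.C (c j ^ 2)) : Polynomial ℝ) =
        ((Finset.univ.val.map fun j => -(c j ^ 2)).map
          fun x => Polynomial.X - Polynomial.C x).prod := by
      rw [Multiset.map_map, Finset.prod]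
      refine congrArg _ (Multiset.map_congr rfl fun j _ => ?_)
      simp
    rw [this, Polynomial.roots_multiset_prod_X_sub_C, Multiset.map_map]
    refine Multiset.map_congr rfl fun j _ => ?_
    simp [Real.sqrt_sq (hc j).le]
  have hm : Finset.univ.val.map a = Finset.univ.val.map b := by
    rw [← key a ha, ← key b hb, h]
  simp only [Fin.univ_val_map, Multiset.coe_eq_coe] at hm
  have hp := (((Tuple.sort a).ofFn_comp_perm a).trans hm).trans
    ((Tuple.sort b).ofFn_comp_perm b).symm
  have he : a ∘ Tuple.sort a = b ∘ Tuple.sort b :=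
    List.ofFn_injective <| hp.eq_of_pairwise'
      (Tuple.monotone_sort a).sortedLE_ofFn.pairwise
      (Tuple.monotone_sort b).sortedLE_ofFn.pairwise
  refine ⟨(Tuple.sort b).symm.trans (Tuple.sort a), fun j => ?_⟩
  have := congrFun he ((Tuple.sort b).symm j)
  simpa using this.symm

lemma ellipsoid_perm {n : ℕ} (a b : Fin n → ℝ) (σ : Equiv.Perm (Fin n))
    (h : ∀ j, b j = a (σ j)) :
    ellipsoidSet b = LinearIsometryEquiv.piLpCongrLeft 2 ℝ ℝ σ.symm '' ellipsoidSet a := by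
  rw [show (LinearIsometryEquiv.piLpCongrLeft 2 ℝ ℝ σ.symm '' ellipsoidSet a) =
    (LinearIsometryEquiv.piLpCongrLeft 2 ℝ ℝ σ.symm).symm ⁻¹' ellipsoidSet a from
      (LinearIsometryEquiv.piLpCongrLeft 2 ℝ ℝ σ.symm).toEquiv.image_eq_preimage_symm _]
  ext x
  simp only [ellipsoidSet, mem_preimage, mem_ofPred_eq]
  conv_rhs => rw [← Equiv.sum_comp σ]
  simp [h, LinearIsometryEquiv.piLpCongrLeft_apply, Equiv.piCongrLeft'_apply]

/-- **Theorem (main result).** Two centered ellipsoids in `ℝⁿ`, `n ≥ 2`, with equal dual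
volumes `Ṽ_1, …, Ṽ_n` are congruent; equivalently, their multisets of semiaxes coincide. -/
theorem dualVolumes_determine_ellipsoid
    (n : ℕ) (hn : 2 ≤ n) (a b : Fin n → ℝ)
    (ha : ∀ j, 0 < a j) (hb : ∀ j, 0 < b j)
    (T₁ T₂ : EuclideanSpace ℝ (Fin n) ≃ₗᵢ[ℝ] EuclideanSpace ℝ (Fin n))
    (E₁ E₂ : Set (EuclideanSpace ℝ (Fin n)))
    (hE₁ : E₁ = T₁ '' ellipsoidSet a) (hE₂ : E₂ = T₂ '' ellipsoidSet b)
    (h : ∀ i : ℕ, 1 ≤ i → i ≤ n → dualVolume n (i : ℝ) E₁ = dualVolume n (i : ℝ) E₂) :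
    (∃ T : EuclideanSpace ℝ (Fin n) ≃ₗᵢ[ℝ] EuclideanSpace ℝ (Fin n), E₂ = T '' E₁) ∧
      ∃ σ : Equiv.Perm (Fin n), ∀ j, b j = a (σ j) := by
  subst hE₁ hE₂
  have hca : ∀ j, 0 < (a j ^ 2)⁻¹ := fun j => by have := ha j; positivity
  have hcb : ∀ j, 0 < (b j ^ 2)⁻¹ := fun j => by have := hb j; positivity
  have hn0 : (1 / (n : ℝ)) ≠ 0 := by
    have : (n : ℝ) ≠ 0 := by positivity
    positivity
  have hV : ∀ i : ℕ, 1 ≤ i → i ≤ n →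
      (∫ θ : Metric.sphere (0 : EuclideanSpace ℝ (Fin n)) 1,
        ((√(qf (fun j => (a j ^ 2)⁻¹) T₁ θ))⁻¹) ^ i ∂(sphereMeasure n)) =
      ∫ θ : Metric.sphere (0 : EuclideanSpace ℝ (Fin n)) 1,
        ((√(qf (fun j => (b j ^ 2)⁻¹) T₂ θ))⁻¹) ^ i ∂(sphereMeasure n) := by
    intro i h1 h2
    have := h i h1 h2
    rw [dualVolume_ellipsoid a ha, dualVolume_ellipsoid b hb] at this
    exact mul_left_cancel₀ hn0 this
  have hpi : (√π ^ n) ≠ 0 := by positivity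
  have hprod : ∏ j, a j = ∏ j, b j := by
    have g1 := gauss (by omega) _ hca T₁
    have g2 := gauss (by omega) _ hcb T₂
    rw [hV n (by omega) le_rfl, g2] at g1
    have := mul_left_cancel₀ hpi g1
    simpa [Real.sqrt_inv, Real.sqrt_sq (ha _).le, Real.sqrt_sq (hb _).le] using this.symm
  have hpoly := core a b ha hb hprod (fun k hk => (moment _ hca T₁ k hk).1)
    (fun k hk => (moment _ hcb T₂ k hk).1) (fun k hk => by
      apply mul_left_cancel₀ hpi
      rw [(moment _ hca T₁ k hk).2, (moment _ hcb T₂ k hk).2, hV (k + 1) (by omega) (by omega)])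
  obtain ⟨σ, hσ⟩ := perm_of_poly a b ha hb hpoly
  refine ⟨⟨(T₁.symm.trans (LinearIsometryEquiv.piLpCongrLeft 2 ℝ ℝ σ.symm)).trans T₂, ?_⟩, σ, hσ⟩
  rw [ellipsoid_perm a b σ hσ, image_image, image_image]
  simp
end

section
/- Let E be an ellipsoid in ℝⁿ centered at the origin. Then for every real number i one has Ṽ_i(E) = (1/κₙ) · Ṽₙ(E) · Ṽ_{n−i}(E°), where E° is the polar body of E and κₙ is the volume of the unit Euclidean ball in ℝⁿ. -/
open MeasureTheory Real Set
open scoped RealInnerProductSpace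

/-- The polar body `K° = {x : ⟨x,y⟩ ≤ 1 for all y ∈ K}`. -/
def polarBody {n : ℕ} (K : Set (EuclideanSpace ℝ (Fin n))) :
    Set (EuclideanSpace ℝ (Fin n)) :=
  {x | ∀ y ∈ K, ⟪x, y⟫ ≤ 1}

/-- `κₙ = π^{n/2} / Γ(n/2 + 1)`, the volume of the unit Euclidean ball in `ℝⁿ`. -/
noncomputable def kappa (n : ℕ) : ℝ :=
  Real.pi ^ ((n : ℝ) / 2) / Real.Gamma ((n : ℝ) / 2 + 1)

abbrev EE (n : ℕ) := EuclideanSpace ℝ (Fin n)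

open scoped ENNReal

lemma charpoly_comp_swap {n : ℕ} (A : EE n ≃ₗ[ℝ] EE n) (B : EE n →ₗ[ℝ] EE n) :
    (B ∘ₗ A.toLinearMap).charpoly = (A.toLinearMap ∘ₗ B).charpoly := by
  rw [← LinearEquiv.charpoly_conj A (B ∘ₗ A.toLinearMap)]
  congr 1
  ext1 x
  simp [LinearEquiv.conj_apply]

lemma exists_isometry {n : ℕ} (A : EE n ≃ₗ[ℝ] EE n) :
    ∃ W : EE n ≃ₗᵢ[ℝ] EE n, ∀ x, ‖A (W x)‖ = ‖LinearMap.adjoint A.toLinearMap x‖ := by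
  set B := LinearMap.adjoint A.toLinearMap with hB
  have h1 : (B ∘ₗ A.toLinearMap).IsSymmetric := by
    intro x y
    simp [hB, LinearMap.adjoint_inner_left, LinearMap.adjoint_inner_right]
  have h2 : (A.toLinearMap ∘ₗ B).IsSymmetric := by
    intro x y
    have e1 : ⟪B y, B x⟫ = ⟪y, A (B x)⟫ := LinearMap.adjoint_inner_left A.toLinearMap (B x) y
    have e2 : ⟪B x, B y⟫ = ⟪x, A (B y)⟫ := LinearMap.adjoint_inner_left A.toLinearMap (B y) x
    change ⟪A (B x), y⟫ = ⟪x, A (B y)⟫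
    rw [← e2, real_inner_comm, ← e1, real_inner_comm]
  have hn : Module.finrank ℝ (EE n) = n := by simp
  have hev : h1.eigenvalues hn = h2.eigenvalues hn :=
    (LinearMap.IsSymmetric.eigenvalues_eq_eigenvalues_iff h1 hn h2 hn).2 (charpoly_comp_swap A B)
  let b := h1.eigenvectorBasis hn
  let c := h2.eigenvectorBasis hn
  let W : EE n ≃ₗᵢ[ℝ] EE n := c.equiv b (Equiv.refl _)
  have hW : ∀ j, W (c j) = b j := by intro j; simp [W]
  have key : (B ∘ₗ A.toLinearMap) ∘ₗ W.toLinearEquiv.toLinearMap =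
      W.toLinearEquiv.toLinearMap ∘ₗ (A.toLinearMap ∘ₗ B) := by
    apply c.toBasis.ext
    intro j
    have e1 := h1.apply_eigenvectorBasis hn j
    have e2 := h2.apply_eigenvectorBasis hn j
    change (B ∘ₗ A.toLinearMap) (W (c.toBasis j)) = W ((A.toLinearMap ∘ₗ B) (c.toBasis j))
    rw [OrthonormalBasis.coe_toBasis, hW, e1, e2, hev, map_smul]
    exact congrArg _ (hW j).symm
  refine ⟨W, fun x => ?_⟩
  have hx : B (A (W x)) = W (A (B x)) := LinearMap.congr_fun key x
  have : ‖A (W x)‖ ^ 2 = ‖B x‖ ^ 2 := by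
    rw [← real_inner_self_eq_norm_sq, ← real_inner_self_eq_norm_sq]
    have e1 : ⟪B (A (W x)), W x⟫ = ⟪A (W x), A (W x)⟫ :=
      LinearMap.adjoint_inner_left A.toLinearMap (W x) (A (W x))
    have e2 : ⟪B x, B x⟫ = ⟪x, A (B x)⟫ :=
      LinearMap.adjoint_inner_left A.toLinearMap (B x) x
    rw [← e1, hx, W.inner_map_map, e2, real_inner_comm]
  exact (sq_eq_sq₀ (norm_nonneg _) (norm_nonneg _)).1 this

lemma polar_lintegral {n : ℕ} (F : EE n → ℝ≥0∞) (hn : 0 < n) (hF : Measurable F) :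
    ∫⁻ x, F x = ∫⁻ θ, ∫⁻ r, F ((r : Ioi (0 : ℝ)).1 • (θ : Metric.sphere (0 : EE n) 1).1)
      ∂(Measure.volumeIoiPow (n - 1)) ∂(sphereMeasure n) := by
  have : NeZero n := ⟨hn.ne'⟩
  have hmp := (volume : Measure (EE n)).measurePreserving_homeomorphUnitSphereProd
  have hfr : Module.finrank ℝ (EE n) = n := by simp
  rw [hfr] at hmp
  have hm : Measurable fun p : Metric.sphere (0 : EE n) 1 × Ioi (0 : ℝ) => F (p.2.1 • p.1.1) := by
    apply hF.comp
    fun_prop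
  unfold sphereMeasure
  rw [← lintegral_prod (f := fun p : Metric.sphere (0 : EE n) 1 × Ioi (0 : ℝ) =>
    F (p.2.1 • p.1.1)) hm.aemeasurable, ← hmp.lintegral_comp hm]
  have e : ∀ x : ({0}ᶜ : Set (EE n)), F (((homeomorphUnitSphereProd (EE n)) x).2.1 •
      ((homeomorphUnitSphereProd (EE n)) x).1.1) = F x.1 := by
    intro x
    have := congrArg Subtype.val ((homeomorphUnitSphereProd (EE n)).symm_apply_apply x)
    simp only [homeomorphUnitSphereProd_symm_apply_coe] at this
    rw [this]
  simp_rw [e]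
  rw [lintegral_subtype_comap (measurableSet_singleton _).compl, restrict_compl_singleton]

lemma lintegral_homog {n : ℕ} (hn : 0 < n) (M : EE n ≃ₗ[ℝ] EE n) (G : EE n → ℝ≥0∞)
    (hG : Measurable G) (hG0 : ∀ (r : ℝ) x, 0 < r → G (r • x) = G x) :
    ∫⁻ x, G x * {x | ‖M x‖ < 1}.indicator 1 x =
      ∫⁻ θ, G (θ : Metric.sphere (0 : EE n) 1).1 * ENNReal.ofReal ((‖M θ.1‖⁻¹) ^ n / n)
        ∂(sphereMeasure n) := by
  have hMc : Continuous M := LinearMap.continuous_of_finiteDimensional M.toLinearMap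
  have hS : MeasurableSet {x | ‖M x‖ < 1} :=
    (isOpen_lt (hMc.norm) continuous_const).measurableSet
  rw [polar_lintegral (fun x => G x * {x | ‖M x‖ < 1}.indicator 1 x) hn (hG.mul (measurable_one.indicator hS))]
  refine lintegral_congr fun θ => ?_
  have hθ : θ.1 ≠ 0 := ne_zero_of_mem_unit_sphere θ
  have hp : 0 < ‖M θ.1‖ := norm_pos_iff.2 (by simpa using hθ)
  have e : ∀ r : Ioi (0 : ℝ), G (r.1 • θ.1) * {x | ‖M x‖ < 1}.indicator 1 (r.1 • θ.1) =
      G θ.1 * (Iio (⟨‖M θ.1‖⁻¹, inv_pos.2 hp⟩ : Ioi (0 : ℝ))).indicator 1 r := by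
    intro r
    have hr : 0 < r.1 := r.2
    rw [hG0 _ _ hr]
    congr 1
    have : (r.1 • θ.1 ∈ {x | ‖M x‖ < 1}) ↔ r ∈ Iio (⟨‖M θ.1‖⁻¹, inv_pos.2 hp⟩ : Ioi (0 : ℝ)) := by
      rw [mem_Iio, ← Subtype.coe_lt_coe]
      simp only [mem_ofPred_eq, map_smul, norm_smul, Real.norm_eq_abs, abs_of_pos hr]
      rw [lt_inv_comm₀ hr hp, ← one_div, lt_div_iff₀ hr, mul_comm]
    by_cases h : r ∈ Iio (⟨‖M θ.1‖⁻¹, inv_pos.2 hp⟩ : Ioi (0 : ℝ))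
    · rw [indicator_of_mem h, indicator_of_mem (this.2 h)]; rfl
    · rw [indicator_of_notMem h, indicator_of_notMem (fun h' => h (this.1 h'))]
  simp_rw [e]
  rw [lintegral_const_mul _ (measurable_one.indicator measurableSet_Iio),
    lintegral_indicator_one measurableSet_Iio, Measure.volumeIoiPow_apply_Iio]
  have h1 : n - 1 + 1 = n := by omega
  have h2 : ((n - 1 : ℕ) : ℝ) + 1 = n := by exact_mod_cast h1
  rw [h1, h2]

lemma lintegral_sphere_change {n : ℕ} (hn : 0 < n) (M : EE n ≃ₗ[ℝ] EE n) (G : EE n → ℝ≥0∞)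
    (hG : Measurable G) (hG0 : ∀ (r : ℝ) x, 0 < r → G (r • x) = G x) :
    ∫⁻ θ, G (θ : Metric.sphere (0 : EE n) 1).1 ∂(sphereMeasure n) =
      ENNReal.ofReal |LinearMap.det M.toLinearMap| *
      ∫⁻ θ, G (M (θ : Metric.sphere (0 : EE n) 1).1) * ENNReal.ofReal ((‖M θ.1‖⁻¹) ^ n)
        ∂(sphereMeasure n) := by
  have hMc : Continuous M := LinearMap.continuous_of_finiteDimensional M.toLinearMap
  have hS : MeasurableSet {x : EE n | ‖x‖ < 1} :=
    (isOpen_lt continuous_norm continuous_const).measurableSet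
  have hdet : LinearMap.det M.toLinearMap ≠ 0 := M.isUnit_det'.ne_zero
  have e1 := lintegral_homog hn (LinearEquiv.refl ℝ (EE n)) G hG hG0
  have e2 := lintegral_homog hn M (fun x => G (M x)) (hG.comp hMc.measurable)
    (fun r x hr => by simp [hG0 r _ hr])
  have hmap := Measure.map_linearMap_addHaar_eq_smul_addHaar (volume : Measure (EE n)) hdet
  have e3 : ∫⁻ x, G (M x) * {x | ‖M x‖ < 1}.indicator 1 x =
      ENNReal.ofReal |(LinearMap.det M.toLinearMap)⁻¹| *
        ∫⁻ x, G x * {x : EE n | ‖x‖ < 1}.indicator 1 x := by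
    rw [← smul_eq_mul, ← lintegral_smul_measure, ← hmap,
      lintegral_map (f := fun x => G x * {x : EE n | ‖x‖ < 1}.indicator 1 x)
        (hG.mul (measurable_one.indicator hS)) (g := M.toLinearMap) hMc.measurable]
    rfl
  have e4 : ∫⁻ x, G x * {x : EE n | ‖x‖ < 1}.indicator 1 x =
      ENNReal.ofReal |LinearMap.det M.toLinearMap| *
      ∫⁻ x, G (M x) * {x | ‖M x‖ < 1}.indicator 1 x := by
    rw [e3, ← mul_assoc, ← ENNReal.ofReal_mul (abs_nonneg _), ← abs_mul, mul_inv_cancel₀ hdet]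
    simp
  simp only [LinearEquiv.refl_apply] at e1
  rw [e1, e2] at e4
  have hn' : (0 : ℝ) < n := by exact_mod_cast hn
  have hc0 : ENNReal.ofReal ((n : ℝ)⁻¹) ≠ 0 := by simpa using hn.ne'
  have f1 : ∀ θ : Metric.sphere (0 : EE n) 1, G θ.1 * ENNReal.ofReal ((‖θ.1‖⁻¹) ^ n / n) =
      ENNReal.ofReal ((n : ℝ)⁻¹) * G θ.1 := by
    intro θ
    have : ‖θ.1‖ = 1 := by simp
    rw [this, mul_comm]; simp
  have f2 : ∀ θ : Metric.sphere (0 : EE n) 1, G (M θ.1) * ENNReal.ofReal ((‖M θ.1‖⁻¹) ^ n / n) =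
      ENNReal.ofReal ((n : ℝ)⁻¹) * (G (M θ.1) * ENNReal.ofReal ((‖M θ.1‖⁻¹) ^ n)) := by
    intro θ
    rw [div_eq_inv_mul, ENNReal.ofReal_mul (by positivity)]
    ring
  simp_rw [f1, f2] at e4
  rw [lintegral_const_mul' _ _ ENNReal.ofReal_ne_top, lintegral_const_mul' _ _ ENNReal.ofReal_ne_top,
    mul_left_comm] at e4
  exact (ENNReal.mul_right_inj hc0 ENNReal.ofReal_ne_top).1 e4

lemma radial_of_norm {n : ℕ} (K : Set (EE n)) (B : EE n →ₗ[ℝ] EE n)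
    (hK : ∀ x, x ∈ K ↔ ‖B x‖ ≤ 1) (x : EE n) (hx : 0 < ‖B x‖) : radial K x = ‖B x‖⁻¹ := by
  have : {t : ℝ | 0 ≤ t ∧ t • x ∈ K} = Icc 0 ‖B x‖⁻¹ := by
    ext t
    simp only [mem_ofPred_eq, mem_Icc, hK, map_smul, norm_smul, Real.norm_eq_abs]
    refine and_congr_right fun ht => ?_
    rw [abs_of_nonneg ht, ← one_div, le_div_iff₀ hx]
  rw [radial, this, csSup_Icc (by positivity)]

lemma mem_ellipsoid {n : ℕ} (A : EE n ≃ₗ[ℝ] EE n) (x : EE n) :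
    x ∈ A '' Metric.closedBall (0 : EE n) 1 ↔ ‖A.symm.toLinearMap x‖ ≤ 1 := by
  constructor
  · rintro ⟨y, hy, rfl⟩
    simpa using hy
  · intro h
    exact ⟨A.symm x, by simpa using h, by simp⟩

lemma mem_polar {n : ℕ} (A : EE n ≃ₗ[ℝ] EE n) (x : EE n) :
    x ∈ polarBody (A '' Metric.closedBall (0 : EE n) 1) ↔
      ‖LinearMap.adjoint A.toLinearMap x‖ ≤ 1 := by
  set v := LinearMap.adjoint A.toLinearMap x with hv
  have hin : ∀ z, ⟪x, A z⟫ = ⟪v, z⟫ := fun z =>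
    (LinearMap.adjoint_inner_left A.toLinearMap z x).symm
  constructor
  · intro h
    by_cases h0 : ‖v‖ = 0
    · rw [h0]; exact zero_le_one
    have := h (A (‖v‖⁻¹ • v)) ⟨_, by simp [norm_smul, h0], rfl⟩
    rw [hin, inner_smul_right, real_inner_self_eq_norm_sq, sq, ← mul_assoc, inv_mul_cancel₀ h0,
      one_mul] at this
    exact this
  · rintro h _ ⟨z, hz, rfl⟩
    rw [hin]
    have hz' : ‖z‖ ≤ 1 := by simpa using hz
    exact (real_inner_le_norm _ _).trans (mul_le_one₀ h (norm_nonneg _) hz')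

/-- the spherical integral of a power of a norm, as a lower integral -/
noncomputable def LL {n : ℕ} (B : EE n →ₗ[ℝ] EE n) (s : ℝ) : ℝ≥0∞ :=
  ∫⁻ θ, ENNReal.ofReal (‖B (θ : Metric.sphere (0 : EE n) 1).1‖ ^ s) ∂(sphereMeasure n)

lemma dualVolume_eq_LL {n : ℕ} (K : Set (EE n)) (B : EE n →ₗ[ℝ] EE n)
    (hK : ∀ x, x ∈ K ↔ ‖B x‖ ≤ 1) (hB : ∀ x, x ≠ 0 → B x ≠ 0) (i : ℝ) :
    dualVolume n i K = (1 / n) * (LL B (-i)).toReal := by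
  unfold dualVolume LL
  congr 1
  have e : ∀ θ : Metric.sphere (0 : EE n) 1, radial K θ.1 ^ i = ‖B θ.1‖ ^ (-i) := by
    intro θ
    rw [radial_of_norm K B hK _ (norm_pos_iff.2 (hB _ (ne_zero_of_mem_unit_sphere θ))),
      Real.inv_rpow (norm_nonneg _), Real.rpow_neg (norm_nonneg _)]
  simp_rw [e]
  have hMc : Continuous B := LinearMap.continuous_of_finiteDimensional B
  rw [integral_eq_lintegral_of_nonneg_ae]
  · exact Filter.Eventually.of_forall fun θ => Real.rpow_nonneg (norm_nonneg _) _
  · refine Measurable.aestronglyMeasurable ?_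
    exact ((hMc.norm.measurable).comp measurable_subtype_coe).pow_const _

lemma LL_inv {n : ℕ} (hn : 0 < n) (A : EE n ≃ₗ[ℝ] EE n) (i : ℝ) :
    LL A.symm.toLinearMap (-i) =
      ENNReal.ofReal |LinearMap.det A.toLinearMap| * LL A.toLinearMap (i - n) := by
  have hc : Continuous A.symm := LinearMap.continuous_of_finiteDimensional A.symm.toLinearMap
  have := lintegral_sphere_change hn A
    (fun x => ENNReal.ofReal ((‖A.symm x‖ / ‖x‖) ^ (-i)))
    (ENNReal.measurable_ofReal.comp
      ((hc.norm.measurable.div continuous_norm.measurable).pow_const _))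
    (fun r x hr => by
      have : (‖A.symm (r • x)‖ / ‖r • x‖) = ‖A.symm x‖ / ‖x‖ := by
        rw [map_smul, norm_smul, norm_smul, mul_div_mul_left _ _ (norm_ne_zero_iff.2 hr.ne')]
      simp only [this])
  unfold LL
  refine Eq.trans ?_ (this.trans (congrArg _ ?_))
  · refine lintegral_congr fun θ => ?_
    simp
  · symm
    refine lintegral_congr fun θ => ?_
    have hp : 0 < ‖A θ.1‖ := norm_pos_iff.2 (by simpa using ne_zero_of_mem_unit_sphere θ)
    have h1 : ‖θ.1‖ = 1 := by simp
    simp only [LinearEquiv.symm_apply_apply, h1, LinearEquiv.coe_coe]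
    rw [← ENNReal.ofReal_mul (by positivity), one_div, Real.inv_rpow hp.le, Real.rpow_neg hp.le,
      inv_inv, Real.rpow_sub hp, Real.rpow_natCast, inv_pow, div_eq_mul_inv]

lemma LL_adjoint {n : ℕ} (hn : 0 < n) (A : EE n ≃ₗ[ℝ] EE n) (s : ℝ) :
    LL A.toLinearMap s = LL (LinearMap.adjoint A.toLinearMap) s := by
  obtain ⟨W, hW⟩ := exists_isometry A
  have hc : Continuous A := LinearMap.continuous_of_finiteDimensional A.toLinearMap
  have := lintegral_sphere_change hn W.toLinearEquiv
    (fun x => ENNReal.ofReal ((‖A x‖ / ‖x‖) ^ s))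
    (ENNReal.measurable_ofReal.comp
      ((hc.norm.measurable.div continuous_norm.measurable).pow_const _))
    (fun r x hr => by
      have : (‖A (r • x)‖ / ‖r • x‖) = ‖A x‖ / ‖x‖ := by
        rw [map_smul, norm_smul, norm_smul, mul_div_mul_left _ _ (norm_ne_zero_iff.2 hr.ne')]
      simp only [this])
  have hdet : |LinearMap.det W.toLinearEquiv.toLinearMap| = 1 := by
    rw [← LinearMap.normDet_eq_abs_det]
    exact W.toLinearIsometry.normDet_eq_one
  rw [hdet, ENNReal.ofReal_one, one_mul] at this
  unfold LL
  convert this using 1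
  · refine lintegral_congr fun θ => ?_
    simp
  · refine lintegral_congr fun θ => ?_
    have h1 : ‖θ.1‖ = 1 := by simp
    simp [hW]

lemma LL_zero {n : ℕ} (hn : 0 < n) (B : EE n →ₗ[ℝ] EE n) :
    (LL B 0).toReal = n * kappa n := by
  have : Nonempty (Fin n) := ⟨⟨0, hn⟩⟩
  have hG : 0 < Real.Gamma ((n : ℝ) / 2 + 1) := Real.Gamma_pos_of_pos (by positivity)
  unfold LL sphereMeasure kappa
  simp only [Real.rpow_zero, ENNReal.ofReal_one, lintegral_one, Measure.toSphere_apply_univ,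
    EuclideanSpace.volume_ball, one_pow, one_mul, finrank_euclideanSpace, Fintype.card_fin]
  rw [ENNReal.toReal_mul, ENNReal.toReal_natCast, ENNReal.toReal_ofReal (by positivity),
    Real.sqrt_eq_rpow, ← Real.rpow_natCast, ← Real.rpow_mul Real.pi_pos.le]
  rw [one_div_mul_eq_div]

/-- For a centered ellipsoid `E` in `ℝⁿ`, `Ṽ_i(E) = (1/κₙ) Ṽₙ(E) Ṽ_{n-i}(E°)` for all real `i`. -/
theorem dualVolume_polar_relation
    (n : ℕ) (hn : 0 < n)
    (A : EuclideanSpace ℝ (Fin n) ≃ₗ[ℝ] EuclideanSpace ℝ (Fin n))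
    (E : Set (EuclideanSpace ℝ (Fin n)))
    (hE : E = A '' Metric.closedBall (0 : EuclideanSpace ℝ (Fin n)) 1)
    (i : ℝ) :
    dualVolume n i E = (1 / kappa n) * dualVolume n (n : ℝ) E *
      dualVolume n ((n : ℝ) - i) (polarBody E) := by
  subst hE
  have hn' : (n : ℝ) ≠ 0 := by exact_mod_cast hn.ne'
  have hk : kappa n ≠ 0 := by
    have hG : 0 < Real.Gamma ((n : ℝ) / 2 + 1) := Real.Gamma_pos_of_pos (by positivity)
    have := Real.pi_pos
    unfold kappa
    positivity
  have hs : ∀ x : EE n, x ≠ 0 → A.symm.toLinearMap x ≠ 0 := fun x hx => by simpa using hx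
  have ha : ∀ x : EE n, x ≠ 0 → LinearMap.adjoint A.toLinearMap x ≠ 0 := by
    intro x hx h0
    have := LinearMap.adjoint_inner_left A.toLinearMap (A.symm x) x
    rw [h0, inner_zero_left] at this
    simp only [LinearEquiv.coe_coe, LinearEquiv.apply_symm_apply] at this
    exact hx (inner_self_eq_zero.1 this.symm)
  rw [dualVolume_eq_LL _ _ (mem_ellipsoid A) hs i, dualVolume_eq_LL _ _ (mem_ellipsoid A) hs n,
    dualVolume_eq_LL _ _ (mem_polar A) ha, LL_inv hn, LL_inv hn, sub_self, neg_sub,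
    ← LL_adjoint hn, ENNReal.toReal_mul, ENNReal.toReal_mul, LL_zero hn]
  field_simp
end

section
/- Let E be a centered ellipsoid in ℝⁿ with semiaxes a₁,…,aₙ > 0. For every real number i with 0 < i < n, Ṽ_i(E) = (4π^{n/2} / (n Γ((n−i)/2) Γ(i/2))) · ∫₀^∞ u^{i−1} · ((1 + u²/a₁²)⋯(1 + u²/aₙ²))^{−1/2} du. -/
open MeasureTheory Real Set

/-- Polar coordinates for lower integrals. -/
theorem aux_polar (n : ℕ) (f : EuclideanSpace ℝ (Fin n) → ENNReal) (hn : 0 < n)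
    (hf : Measurable f) :
    ∫⁻ x, f x = ∫⁻ θ : Metric.sphere (0 : EuclideanSpace ℝ (Fin n)) 1,
      (∫⁻ r in Ioi (0 : ℝ), ENNReal.ofReal (r ^ (n - 1)) *
        f (r • (θ : EuclideanSpace ℝ (Fin n)))) ∂(sphereMeasure n) := by
  have : Nonempty (Fin n) := ⟨⟨0, hn⟩⟩
  set μ : Measure (EuclideanSpace ℝ (Fin n)) := volume with hμ
  have hg : Measurable (fun p : Metric.sphere (0 : EuclideanSpace ℝ (Fin n)) 1 × Ioi (0 : ℝ) =>
      f ((p.2 : ℝ) • (p.1 : EuclideanSpace ℝ (Fin n)))) := by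
    apply hf.comp
    fun_prop
  calc ∫⁻ x, f x ∂μ
      = ∫⁻ x : ({(0)}ᶜ : Set (EuclideanSpace ℝ (Fin n))), f x.1 ∂(μ.comap (↑)) := by
        rw [lintegral_subtype_comap (measurableSet_singleton _).compl f,
          restrict_compl_singleton]
    _ = ∫⁻ p, f ((p.2 : ℝ) • (p.1 : EuclideanSpace ℝ (Fin n)))
          ∂(μ.toSphere.prod (Measure.volumeIoiPow (n - 1))) := by
        have h := μ.measurePreserving_homeomorphUnitSphereProd.lintegral_comp hg
        rw [finrank_euclideanSpace_fin] at h
        rw [← h]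
        refine lintegral_congr fun x => ?_
        have hx : ‖(x : EuclideanSpace ℝ (Fin n))‖ ≠ 0 := norm_ne_zero_iff.2 x.2
        congr 1
        simp [smul_smul, hx]
    _ = _ := by
        rw [lintegral_prod _ hg.aemeasurable]
        refine lintegral_congr fun θ => ?_
        have hgθ : Measurable (fun y : Ioi (0 : ℝ) =>
            f ((y : ℝ) • (θ : EuclideanSpace ℝ (Fin n)))) := hg.comp measurable_prodMk_left
        rw [Measure.volumeIoiPow, lintegral_withDensity_eq_lintegral_mul _ (by fun_prop) hgθ]
        exact lintegral_subtype_comap measurableSet_Ioi (fun r : ℝ =>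
          ENNReal.ofReal (r ^ (n - 1)) * f (r • (θ : EuclideanSpace ℝ (Fin n))))

theorem aux_gamma (s b : ℝ) (hs : 0 < s) (hb : 0 < b) :
    ∫⁻ u in Ioi (0 : ℝ), ENNReal.ofReal (u ^ (s - 1) * exp (-b * u ^ 2)) =
      ENNReal.ofReal (b ^ (-s / 2) * (1 / 2) * Gamma (s / 2)) := by
  have h1 := integral_rpow_mul_exp_neg_mul_rpow (p := 2) (q := s - 1) (b := b) two_pos
    (by linarith) hb
  have h2 := integrableOn_rpow_mul_exp_neg_mul_rpow (p := 2) (s := s - 1) (b := b)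
    (by linarith) two_pos hb
  simp only [sub_add_cancel, rpow_two] at h1 h2
  rw [← h1, ofReal_integral_eq_lintegral_ofReal h2]
  filter_upwards [ae_restrict_mem measurableSet_Ioi] with u hu
  have : (0 : ℝ) < u := hu
  positivity

theorem aux_gauss (n : ℕ) (c : Fin n → ℝ) (hc : ∀ j, 0 < c j) :
    ∫⁻ x : EuclideanSpace ℝ (Fin n), ENNReal.ofReal (exp (-∑ j, c j * (x j) ^ 2)) =
      ENNReal.ofReal (π ^ ((n : ℝ) / 2) * (∏ j, c j) ^ (-(1 : ℝ) / 2)) := by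
  rw [← (PiLp.volume_preserving_toLp (Fin n)).lintegral_comp (by fun_prop)]
  have e : ∀ x : Fin n → ℝ, exp (-∑ j, c j * ((WithLp.toLp 2 x : EuclideanSpace ℝ (Fin n)) j) ^ 2)
      = ∏ j, exp (-c j * (x j) ^ 2) := by
    intro x
    rw [← exp_sum, ← Finset.sum_neg_distrib]
    simp
  simp only [e]
  have hI : Integrable (fun x : Fin n → ℝ => ∏ j, exp (-c j * (x j) ^ 2)) volume :=
    Integrable.fintype_prod (f := fun j (t : ℝ) => exp (-c j * t ^ 2))
      fun j => integrable_exp_neg_mul_sq (hc j)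
  rw [← ofReal_integral_eq_lintegral_ofReal hI
    (Filter.Eventually.of_forall fun x => by positivity),
    integral_fintype_prod_volume_eq_prod (fun j (t : ℝ) => exp (-c j * t ^ 2))]
  congr 1
  simp only [integral_gaussian]
  have h1 : ∀ j, √(π / c j) = √π * (c j) ^ (-(1 : ℝ) / 2) := by
    intro j
    rw [sqrt_div pi_pos.le, div_eq_mul_inv, sqrt_eq_rpow (c j), ← rpow_neg (hc j).le]
    norm_num
  simp only [h1]
  rw [Finset.prod_mul_distrib, finsetProd_rpow _ _ (fun j _ => (hc j).le)]
  congr 1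
  simp only [Finset.prod_const, Finset.card_univ, Fintype.card_fin]
  rw [sqrt_eq_rpow, ← rpow_natCast, ← rpow_mul pi_pos.le]
  congr 1
  ring

theorem aux_radial (n : ℕ) (a : Fin n → ℝ) (x : EuclideanSpace ℝ (Fin n))
    (hQ : 0 < ∑ j, (x j) ^ 2 / (a j) ^ 2) :
    radial (ellipsoidSet a) x = (∑ j, (x j) ^ 2 / (a j) ^ 2) ^ (-(1 : ℝ) / 2) := by
  set Q := ∑ j, (x j) ^ 2 / (a j) ^ 2 with hQd
  have h : {t : ℝ | 0 ≤ t ∧ t • x ∈ ellipsoidSet a} = Icc 0 (√Q)⁻¹ := by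
    ext t
    simp only [mem_ofPred_eq, ellipsoidSet, mem_Icc]
    refine and_congr_right fun ht => ?_
    have : ∑ j, ((t • x) j) ^ 2 / (a j) ^ 2 = t ^ 2 * Q := by
      rw [hQd, Finset.mul_sum]
      refine Finset.sum_congr rfl fun j _ => ?_
      simp [mul_pow, mul_div_assoc]
    have hs : 0 < √Q := sqrt_pos.2 hQ
    have h2 : t ^ 2 * Q = (t * √Q) ^ 2 := by rw [mul_pow, sq_sqrt hQ.le]
    rw [this, h2, sq_le_one_iff₀ (by positivity), ← le_div_iff₀ hs, one_div]
  rw [radial, h, csSup_Icc (by positivity), sqrt_eq_rpow, ← rpow_neg hQ.le]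
  norm_num

theorem aux_Qpos (n : ℕ) (a : Fin n → ℝ) (ha : ∀ j, 0 < a j) (x : EuclideanSpace ℝ (Fin n))
    (hx : x ≠ 0) : 0 < ∑ j, (x j) ^ 2 / (a j) ^ 2 := by
  obtain ⟨j, hj⟩ : ∃ j, x j ≠ 0 := by
    by_contra! h
    exact hx (by ext j; simpa using h j)
  refine Finset.sum_pos' (fun j _ => by positivity) ⟨j, Finset.mem_univ _, ?_⟩
  have := ha j
  positivity

/-- Moment representation of the dual volume `Ṽ_i` of a centered ellipsoid, for `0 < i < n`. -/
theorem dualVolume_moment_formula_pos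
    (n : ℕ) (hn : 0 < n) (a : Fin n → ℝ) (ha : ∀ j, 0 < a j)
    (i : ℝ) (hi0 : 0 < i) (hin : i < n) :
    dualVolume n i (ellipsoidSet a) =
      4 * Real.pi ^ ((n : ℝ) / 2) /
          (n * Real.Gamma (((n : ℝ) - i) / 2) * Real.Gamma (i / 2)) *
        ∫ u in Ioi (0 : ℝ),
          u ^ (i - 1) * (∏ j, (1 + u ^ 2 / (a j) ^ 2)) ^ (-(1 : ℝ) / 2) := by
  set Q : EuclideanSpace ℝ (Fin n) → ℝ := fun x => ∑ j, (x j) ^ 2 / (a j) ^ 2 with hQ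
  have hQm : Measurable Q := by
    rw [hQ]; fun_prop
  have hθ : ∀ θ : Metric.sphere (0 : EuclideanSpace ℝ (Fin n)) 1,
      0 < Q (θ : EuclideanSpace ℝ (Fin n)) := by
    intro θ
    refine aux_Qpos n a ha _ ?_
    intro h
    have := norm_eq_of_mem_sphere θ
    rw [h] at this
    simp at this
  have hG1 : 0 < Gamma (i / 2) := Gamma_pos_of_pos (by linarith)
  have hG2 : 0 < Gamma ((n - i) / 2) := Gamma_pos_of_pos (by linarith)
  have hn' : (0 : ℝ) < n := by exact_mod_cast hn
  let F : EuclideanSpace ℝ (Fin n) → ℝ → ENNReal := fun x u =>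
    ENNReal.ofReal (u ^ (i - 1) * exp (-∑ j, (1 + u ^ 2 / (a j) ^ 2) * (x j) ^ 2))
  have hFm : Measurable (Function.uncurry F) := by
    show Measurable fun p : EuclideanSpace ℝ (Fin n) × ℝ =>
      ENNReal.ofReal (p.2 ^ (i - 1) * exp (-∑ j, (1 + p.2 ^ 2 / (a j) ^ 2) * (p.1 j) ^ 2))
    fun_prop
  -- first order of integration
  have hA : ∫⁻ u in Ioi (0 : ℝ), ∫⁻ x, F x u = ENNReal.ofReal (π ^ ((n : ℝ) / 2)) *
      ∫⁻ u in Ioi (0 : ℝ), ENNReal.ofReal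
        (u ^ (i - 1) * (∏ j, (1 + u ^ 2 / (a j) ^ 2)) ^ (-(1 : ℝ) / 2)) := by
    rw [← lintegral_const_mul _ (by fun_prop)]
    refine setLIntegral_congr_fun measurableSet_Ioi fun u hu => ?_
    have hu' : (0 : ℝ) < u := hu
    simp only [F]
    simp_rw [ENNReal.ofReal_mul (rpow_nonneg hu'.le (i - 1))]
    rw [lintegral_const_mul _ (by fun_prop), aux_gauss n _ (fun j => by positivity),
      ENNReal.ofReal_mul (by positivity)]
    ring
  -- second order of integration
  have hB : ∫⁻ x, ∫⁻ u in Ioi (0 : ℝ), F x u =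
      ENNReal.ofReal (1 / 4 * Gamma (i / 2) * Gamma ((n - i) / 2)) *
      ∫⁻ θ : Metric.sphere (0 : EuclideanSpace ℝ (Fin n)) 1,
        ENNReal.ofReal (Q θ ^ (-i / 2)) ∂(sphereMeasure n) := by
    have hm : Measurable fun x => ∫⁻ u in Ioi (0 : ℝ), F x u := hFm.lintegral_prod_right'
    rw [aux_polar n _ hn hm, ← lintegral_const_mul _ (by fun_prop)]
    refine lintegral_congr fun θ => ?_
    have hq := hθ θ
    have key : ∀ r ∈ Ioi (0 : ℝ), ENNReal.ofReal (r ^ (n - 1)) *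
        ∫⁻ u in Ioi (0 : ℝ), F (r • (θ : EuclideanSpace ℝ (Fin n))) u =
        ENNReal.ofReal (Q θ ^ (-i / 2) * (1 / 2) * Gamma (i / 2)) *
          ENNReal.ofReal (r ^ ((n - i) - 1) * exp (-1 * r ^ 2)) := by
      intro r hr
      have hr' : (0 : ℝ) < r := hr
      have e : ∀ u, F (r • (θ : EuclideanSpace ℝ (Fin n))) u =
          ENNReal.ofReal (exp (-1 * r ^ 2)) *
            ENNReal.ofReal (u ^ (i - 1) * exp (-(r ^ 2 * Q θ) * u ^ 2)) := by
        intro u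
        rw [← ENNReal.ofReal_mul (by positivity)]
        simp only [F]
        congr 1
        have hs : ∑ j, ((θ : EuclideanSpace ℝ (Fin n)) j) ^ 2 = 1 := by
          have h := EuclideanSpace.real_norm_sq_eq (θ : EuclideanSpace ℝ (Fin n))
          rw [norm_eq_of_mem_sphere θ] at h
          rw [← h]; norm_num
        have : ∑ j, (1 + u ^ 2 / (a j) ^ 2) * ((r • (θ : EuclideanSpace ℝ (Fin n))) j) ^ 2 =
            r ^ 2 * ∑ j, ((θ : EuclideanSpace ℝ (Fin n)) j) ^ 2 + r ^ 2 * Q θ * u ^ 2 := by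
          simp only [hQ, Finset.mul_sum, Finset.sum_mul, ← Finset.sum_add_distrib]
          refine Finset.sum_congr rfl fun j _ => ?_
          simp only [PiLp.smul_apply, smul_eq_mul]
          ring
        rw [this, hs, neg_add, exp_add]
        ring_nf
      simp_rw [e]
      rw [lintegral_const_mul _ (by fun_prop), aux_gamma i _ hi0 (by positivity),
        ← ENNReal.ofReal_mul (by positivity), ← ENNReal.ofReal_mul (by positivity),
        ← ENNReal.ofReal_mul (by positivity)]
      congr 1
      have h1 : (r ^ 2 * Q θ) ^ (-i / 2) = r ^ (-i) * Q θ ^ (-i / 2) := by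
        rw [mul_rpow (by positivity) hq.le, ← rpow_two, ← rpow_mul hr'.le]
        congr 2; ring
      have h2 : r ^ ((n : ℝ) - i - 1) = r ^ (n - 1) * r ^ (-i) := by
        rw [← rpow_natCast, ← rpow_add hr', Nat.cast_sub hn]
        congr 1; push_cast; ring
      rw [h1, h2]
      ring
    rw [setLIntegral_congr_fun measurableSet_Ioi key, lintegral_const_mul _ (by fun_prop),
      aux_gamma _ 1 (by linarith) one_pos, ← ENNReal.ofReal_mul (by positivity),
      ← ENNReal.ofReal_mul (by positivity), one_rpow]
    congr 1
    ring
  have hAB := lintegral_lintegral_swap (μ := (volume : Measure (EuclideanSpace ℝ (Fin n))))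
    (ν := volume.restrict (Ioi (0 : ℝ))) hFm.aemeasurable
  rw [hA, hB] at hAB
  have hAB' := congrArg ENNReal.toReal hAB
  rw [ENNReal.toReal_mul, ENNReal.toReal_mul, ENNReal.toReal_ofReal (by positivity),
    ENNReal.toReal_ofReal (by positivity)] at hAB'
  have hL : ∫ θ : Metric.sphere (0 : EuclideanSpace ℝ (Fin n)) 1,
      radial (ellipsoidSet a) (θ : EuclideanSpace ℝ (Fin n)) ^ i ∂(sphereMeasure n) =
      (∫⁻ θ : Metric.sphere (0 : EuclideanSpace ℝ (Fin n)) 1,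
        ENNReal.ofReal (Q θ ^ (-i / 2)) ∂(sphereMeasure n)).toReal := by
    rw [← integral_eq_lintegral_of_nonneg_ae
      (Filter.Eventually.of_forall fun θ => rpow_nonneg (hθ θ).le _)
      (by apply Measurable.aestronglyMeasurable; fun_prop)]
    refine integral_congr_ae (Filter.Eventually.of_forall fun θ => ?_)
    simp only
    rw [aux_radial n a _ (hθ θ), ← rpow_mul (hθ θ).le]
    congr 1; ring
  have hR := integral_eq_lintegral_of_nonneg_ae (μ := volume.restrict (Ioi (0 : ℝ)))
    (f := fun u : ℝ => u ^ (i - 1) * (∏ j, (1 + u ^ 2 / (a j) ^ 2)) ^ (-(1 : ℝ) / 2))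
    (by
      filter_upwards [ae_restrict_mem measurableSet_Ioi] with u hu
      have : (0 : ℝ) < u := hu
      positivity)
    (by apply Measurable.aestronglyMeasurable; fun_prop)
  rw [dualVolume, hL, hR]
  generalize ENNReal.toReal (∫⁻ θ : Metric.sphere (0 : EuclideanSpace ℝ (Fin n)) 1,
    ENNReal.ofReal (Q θ ^ (-i / 2)) ∂(sphereMeasure n)) = L at hAB' ⊢
  generalize ENNReal.toReal (∫⁻ u in Ioi (0 : ℝ), ENNReal.ofReal
    (u ^ (i - 1) * (∏ j, (1 + u ^ 2 / (a j) ^ 2)) ^ (-(1 : ℝ) / 2))) = R at hAB' ⊢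
  field_simp
  linarith
end

section
/- Let E be a centered ellipsoid in ℝⁿ with semiaxes a₁,…,aₙ > 0. For every real number i with −2 < i < 0, Ṽ_i(E) = (4π^{n/2} / (n Γ((n−i)/2) Γ(i/2))) · ∫₀^∞ u^{i−1} · ( ((1 + u²/a₁²)⋯(1 + u²/aₙ²))^{−1/2} − 1 ) du, where Γ(i/2) is the value of the Gamma function extended to negative non-integer arguments via Γ(z) = Γ(z+1)/z. -/
open MeasureTheory Real Set

lemma aux_inner (i q u : ℝ) (hq : 0 < q) (hu : 0 < u) :
    ENNReal.ofReal (u ^ (i - 1) * (1 - Real.exp (-(q * u ^ 2)))) =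
      ∫⁻ y in Ioc (0 : ℝ) 1, ENNReal.ofReal (q * u ^ (i + 1) * Real.exp (-(q * y) * u ^ 2)) := by
  have hcont : Continuous fun y : ℝ => q * u ^ (i + 1) * Real.exp (-(q * y) * u ^ 2) := by
    fun_prop
  have h1 : ∫ y in (0 : ℝ)..1, q * u ^ (i + 1) * Real.exp (-(q * y) * u ^ 2) =
      u ^ (i - 1) * (1 - Real.exp (-(q * u ^ 2))) := by
    rw [intervalIntegral.integral_eq_sub_of_hasDerivAt
      (f := fun y => -u ^ (i - 1) * Real.exp (-(q * y) * u ^ 2)) _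
      (hcont.intervalIntegrable _ _)]
    · simp only [mul_one, mul_zero, neg_zero, zero_mul, Real.exp_zero, neg_mul]
      ring
    · intro y _
      have h2 : HasDerivAt (fun y : ℝ => -(q * y) * u ^ 2) (-(q * 1) * u ^ 2) y :=
        (((hasDerivAt_id y).const_mul q).neg).mul_const _
      have h3 := h2.exp.const_mul (-u ^ (i - 1))
      convert! h3 using 1
      have : u ^ (i + 1) = u ^ (i - 1) * u ^ 2 := by
        rw [← Real.rpow_natCast u 2, ← Real.rpow_add hu]; congr 1; push_cast; ring
      rw [this]; ring
  rw [← h1, intervalIntegral.integral_of_le zero_le_one,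
    ofReal_integral_eq_lintegral_ofReal hcont.integrableOn_Ioc]
  exact Filter.Eventually.of_forall fun y => by positivity

lemma aux_u (i b q : ℝ) (hb : 0 < b) (hq : 0 < q) (hi0 : -2 < i) :
    ∫⁻ u in Ioi (0 : ℝ), ENNReal.ofReal (q * u ^ (i + 1) * Real.exp (-b * u ^ 2)) =
      ENNReal.ofReal (q * (b ^ (-(i + 2) / 2) * (1 / 2) * Real.Gamma ((i + 2) / 2))) := by
  have h := integral_rpow_mul_exp_neg_mul_rpow (p := 2) (q := i + 1) (b := b)
    (by norm_num) (by linarith) hb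
  have hint := integrableOn_rpow_mul_exp_neg_mul_rpow (p := 2) (s := i + 1) (b := b)
    (by linarith) (by norm_num) hb
  rw [show i + 1 + 1 = i + 2 by ring] at h
  rw [← h, ← integral_const_mul, ofReal_integral_eq_lintegral_ofReal (hint.const_mul q)]
  · congr 1; ext u; congr 1; rw [← Real.rpow_natCast u 2]; push_cast; ring
  · filter_upwards [ae_restrict_mem measurableSet_Ioi] with u hu
    have : (0 : ℝ) < u := hu
    simp only [Pi.zero_apply]
    positivity

lemma aux_L1 (i q : ℝ) (hq : 0 < q) (hi0 : -2 < i) (hin : i < 0) :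
    ∫⁻ u in Ioi (0 : ℝ), ENNReal.ofReal (u ^ (i - 1) * (1 - Real.exp (-(q * u ^ 2)))) =
      ENNReal.ofReal (-(1 / 2) * Real.Gamma (i / 2) * q ^ (-i / 2)) := by
  have e1 : ∫⁻ u in Ioi (0 : ℝ), ENNReal.ofReal (u ^ (i - 1) * (1 - Real.exp (-(q * u ^ 2)))) =
      ∫⁻ u in Ioi (0 : ℝ), ∫⁻ y in Ioc (0 : ℝ) 1,
        ENNReal.ofReal (q * u ^ (i + 1) * Real.exp (-(q * y) * u ^ 2)) :=
    setLIntegral_congr_fun measurableSet_Ioi fun u hu => aux_inner i q u hq hu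
  rw [e1, lintegral_lintegral_swap (by fun_prop)]
  have e2 : ∫⁻ y in Ioc (0 : ℝ) 1, ∫⁻ u in Ioi (0 : ℝ),
        ENNReal.ofReal (q * u ^ (i + 1) * Real.exp (-(q * y) * u ^ 2)) =
      ∫⁻ y in Ioc (0 : ℝ) 1, ENNReal.ofReal
        ((q * q ^ (-(i + 2) / 2) * (1 / 2) * Real.Gamma ((i + 2) / 2)) * y ^ (-(i + 2) / 2)) := by
    refine setLIntegral_congr_fun measurableSet_Ioc fun y hy => ?_
    have := aux_u i (q * y) q (mul_pos hq hy.1) hq hi0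
    simp only [this]
    congr 1
    rw [Real.mul_rpow hq.le hy.1.le]; ring
  have hr : -1 < -(i + 2) / 2 := by linarith
  have hint := intervalIntegral.intervalIntegrable_rpow' (a := 0) (b := 1) hr
  rw [intervalIntegrable_iff_integrableOn_Ioc_of_le zero_le_one] at hint
  have hG : 0 < Real.Gamma ((i + 2) / 2) := Real.Gamma_pos_of_pos (by linarith)
  rw [e2, ← ofReal_integral_eq_lintegral_ofReal (hint.const_mul _)]
  · congr 1
    rw [integral_const_mul, ← intervalIntegral.integral_of_le zero_le_one,
      integral_rpow (Or.inl hr)]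
    have h1 : Real.Gamma ((i + 2) / 2) = i / 2 * Real.Gamma (i / 2) := by
      rw [← Real.Gamma_add_one (by linarith)]; congr 1; ring
    have h2 : q * q ^ (-(i + 2) / 2) = q ^ (-i / 2) := by
      rw [← Real.rpow_one_add' hq.le (by linarith)]; congr 1; ring
    rw [h1, h2, Real.one_rpow, Real.zero_rpow (by linarith)]
    have h3 : -(i + 2) / 2 + 1 = -i / 2 := by ring
    rw [h3]
    have : i ≠ 0 := hin.ne
    field_simp
    ring
  · filter_upwards [ae_restrict_mem measurableSet_Ioc] with y hy
    have : (0 : ℝ) < y := hy.1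
    simp only [Pi.zero_apply]
    positivity

/-- quadratic form -/
noncomputable def Qf {n : ℕ} (a : Fin n → ℝ) (x : EuclideanSpace ℝ (Fin n)) : ℝ :=
  ∑ j, (x j) ^ 2 / (a j) ^ 2

lemma Qf_cont {n : ℕ} (a : Fin n → ℝ) : Continuous (Qf a) := by
  unfold Qf; fun_prop

lemma Qf_nonneg {n : ℕ} (a : Fin n → ℝ) (x : EuclideanSpace ℝ (Fin n)) : 0 ≤ Qf a x :=
  Finset.sum_nonneg fun j _ => by positivity

lemma Qf_pos {n : ℕ} (a : Fin n → ℝ) (ha : ∀ j, 0 < a j) (x : EuclideanSpace ℝ (Fin n))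
    (hx : x ≠ 0) : 0 < Qf a x := by
  obtain ⟨j, hj⟩ : ∃ j, x j ≠ 0 := by
    by_contra! h
    exact hx (by ext j; simpa using h j)
  refine Finset.sum_pos' (fun j _ => by positivity) ⟨j, Finset.mem_univ _, ?_⟩
  have := ha j
  positivity

lemma Qf_smul {n : ℕ} (a : Fin n → ℝ) (t : ℝ) (x : EuclideanSpace ℝ (Fin n)) :
    Qf a (t • x) = t ^ 2 * Qf a x := by
  simp only [Qf, Finset.mul_sum, PiLp.smul_apply, smul_eq_mul]
  refine Finset.sum_congr rfl fun j _ => by ring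

lemma radial_eq {n : ℕ} (a : Fin n → ℝ) (ha : ∀ j, 0 < a j) (x : EuclideanSpace ℝ (Fin n))
    (hx : x ≠ 0) : radial (ellipsoidSet a) x = (Qf a x) ^ (-(1 / 2 : ℝ)) := by
  have hq := Qf_pos a ha x hx
  have hs : {t : ℝ | 0 ≤ t ∧ t • x ∈ ellipsoidSet a} = Icc 0 ((Qf a x) ^ (-(1 / 2 : ℝ))) := by
    ext t
    have : t • x ∈ ellipsoidSet a ↔ Qf a (t • x) ≤ 1 := Iff.rfl
    simp only [mem_ofPred_eq, mem_Icc, this, Qf_smul]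
    refine and_congr_right fun ht => ?_
    rw [Real.rpow_neg hq.le, ← Real.sqrt_eq_rpow, ← Real.sqrt_inv, Real.le_sqrt ht (by positivity),
      ← le_div_iff₀ hq, one_div]
  rw [radial, hs, csSup_Icc (by positivity)]

lemma gauss_int {n : ℕ} (b : Fin n → ℝ) (hb : ∀ j, 0 < b j) :
    Integrable (fun x : EuclideanSpace ℝ (Fin n) => Real.exp (-∑ j, b j * x j ^ 2)) ∧
    ∫ x : EuclideanSpace ℝ (Fin n), Real.exp (-∑ j, b j * x j ^ 2) =
      Real.pi ^ ((n : ℝ) / 2) * (∏ j, b j) ^ (-(1 : ℝ) / 2) := by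
  have he : ∀ v : Fin n → ℝ, Real.exp (-∑ j, b j * v j ^ 2) = ∏ j, Real.exp (-b j * v j ^ 2) := by
    intro v
    rw [← Real.exp_sum, ← Finset.sum_neg_distrib]
    simp only [neg_mul]
  constructor
  · rw [← (PiLp.volume_preserving_toLp (Fin n)).integrable_comp_emb
      (MeasurableEquiv.toLp 2 _).measurableEmbedding]
    simp only [Function.comp_def, he]
    exact Integrable.fintype_prod (f := fun j (v : ℝ) => Real.exp (-b j * v ^ 2))
      fun j => integrable_exp_neg_mul_sq (hb j)
  · rw [← (PiLp.volume_preserving_toLp (Fin n)).integral_comp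
      (MeasurableEquiv.toLp 2 _).measurableEmbedding]
    simp only [he]
    rw [integral_fintype_prod_volume_eq_prod (fun j (v : ℝ) => Real.exp (-b j * v ^ 2))]
    simp only [integral_gaussian, Real.sqrt_eq_rpow]
    rw [Real.finsetProd_rpow _ _ (fun j _ => by have := hb j; positivity), Finset.prod_div_distrib,
      Real.div_rpow (by positivity) (Finset.prod_nonneg fun j _ => (hb j).le)]
    simp only [Finset.prod_const, Finset.card_univ, Fintype.card_fin]
    rw [← Real.rpow_natCast, ← Real.rpow_mul (by positivity),
      show -(1 : ℝ) / 2 = -(1 / 2) by ring,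
      Real.rpow_neg (Finset.prod_nonneg fun j _ => (hb j).le), div_eq_mul_inv, mul_one_div]

lemma polar_s3 {n : ℕ} (hn : 0 < n) (a : Fin n → ℝ) (s : ℝ) (hs : 0 < s) :
    ∫ x : EuclideanSpace ℝ (Fin n), Qf a x ^ (s / 2) * Real.exp (-‖x‖ ^ 2) =
      (∫ θ : Metric.sphere (0 : EuclideanSpace ℝ (Fin n)) 1, Qf a θ ^ (s / 2)
        ∂(sphereMeasure n)) * (1 / 2 * Real.Gamma ((n + s) / 2)) := by
  have : Nonempty (Fin n) := ⟨⟨0, hn⟩⟩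
  set E := EuclideanSpace ℝ (Fin n)
  set μ : Measure E := volume
  have hdim : Module.finrank ℝ E = n := by simp [E]
  have h1 : ∫ x : E, Qf a x ^ (s / 2) * Real.exp (-‖x‖ ^ 2) =
      ∫ x : ({(0)}ᶜ : Set E), Qf a x ^ (s / 2) * Real.exp (-‖(x : E)‖ ^ 2) ∂(μ.comap (↑)) := by
    rw [integral_subtype_comap (measurableSet_singleton _).compl
      fun x : E ↦ Qf a x ^ (s / 2) * Real.exp (-‖x‖ ^ 2), restrict_compl_singleton]
  have h2 := μ.measurePreserving_homeomorphUnitSphereProd.integral_comp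
        (Homeomorph.measurableEmbedding _)
        (fun z : Metric.sphere (0 : E) 1 × Ioi (0 : ℝ) =>
          Qf a z.1 ^ (s / 2) * ((z.2 : ℝ) ^ s * Real.exp (-(z.2 : ℝ) ^ 2)))
  have h3 : ∀ x : ({(0)}ᶜ : Set E),
      Qf a (homeomorphUnitSphereProd E x).1 ^ (s / 2) * (((homeomorphUnitSphereProd E x).2 : ℝ) ^ s
        * Real.exp (-((homeomorphUnitSphereProd E x).2 : ℝ) ^ 2)) =
      Qf a x ^ (s / 2) * Real.exp (-‖(x : E)‖ ^ 2) := by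
    intro x
    have hx : 0 < ‖(x : E)‖ := norm_pos_iff.2 x.2
    simp only [homeomorphUnitSphereProd_apply_fst_coe, homeomorphUnitSphereProd_apply_snd_coe]
    rw [Qf_smul, Real.mul_rpow (by positivity) (Qf_nonneg _ _), ← Real.rpow_natCast,
      ← Real.rpow_mul (by positivity), Real.inv_rpow (by positivity)]
    have : ((2 : ℕ) : ℝ) * (s / 2) = s := by push_cast; ring
    rw [this]
    have : ‖(x : E)‖ ^ s ≠ 0 := by positivity
    field_simp
  simp only [h3] at h2
  rw [h1, h2, integral_prod_mul (fun θ : Metric.sphere (0 : E) 1 => Qf a θ ^ (s / 2))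
    (fun r : Ioi (0 : ℝ) => (r : ℝ) ^ s * Real.exp (-(r : ℝ) ^ 2))]
  congr 1
  simp only [Measure.volumeIoiPow, ENNReal.ofReal]
  rw [integral_withDensity_eq_integral_smul (by fun_prop), hdim,
    integral_subtype_comap measurableSet_Ioi
      fun r : ℝ ↦ Real.toNNReal (r ^ (n - 1)) • (r ^ s * Real.exp (-r ^ 2))]
  have hn1 : (1 : ℝ) ≤ n := by exact_mod_cast hn
  have h4 := integral_rpow_mul_exp_neg_rpow (p := 2) (q := n - 1 + s) (by norm_num) (by linarith)
  rw [show ((n : ℝ) + s) = n - 1 + s + 1 by ring, ← h4]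
  refine setIntegral_congr_fun measurableSet_Ioi fun r hr => ?_
  have hr : (0 : ℝ) < r := hr
  simp only [NNReal.smul_def, Real.coe_toNNReal _ (pow_nonneg hr.le _), smul_eq_mul]
  rw [Real.rpow_add hr, ← Real.rpow_natCast r (n - 1), Nat.cast_sub hn, ← Real.rpow_natCast r 2]
  push_cast
  ring

lemma aux_L1' (i q : ℝ) (hq : 0 ≤ q) (hi0 : -2 < i) (hin : i < 0) :
    ∫⁻ u in Ioi (0 : ℝ), ENNReal.ofReal (u ^ (i - 1) * (1 - Real.exp (-(q * u ^ 2)))) =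
      ENNReal.ofReal (-(1 / 2) * Real.Gamma (i / 2) * q ^ (-i / 2)) := by
  rcases hq.eq_or_lt with rfl | h
  · rw [Real.zero_rpow (by linarith)]; simp
  · exact aux_L1 i q h hi0 hin

lemma gauss_diff {n : ℕ} (a : Fin n → ℝ) (u : ℝ) :
    Integrable (fun x : EuclideanSpace ℝ (Fin n) =>
      (1 - Real.exp (-(Qf a x * u ^ 2))) * Real.exp (-‖x‖ ^ 2)) ∧
    ∫ x : EuclideanSpace ℝ (Fin n), (1 - Real.exp (-(Qf a x * u ^ 2))) * Real.exp (-‖x‖ ^ 2) =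
      Real.pi ^ ((n : ℝ) / 2) * (1 - (∏ j, (1 + u ^ 2 / (a j) ^ 2)) ^ (-(1 : ℝ) / 2)) := by
  obtain ⟨i1, e1⟩ := gauss_int (n := n) (fun _ => 1) (fun _ => one_pos)
  obtain ⟨i2, e2⟩ := gauss_int (n := n) (fun j => 1 + u ^ 2 / (a j) ^ 2) (fun j => by positivity)
  have h : (fun x : EuclideanSpace ℝ (Fin n) =>
      (1 - Real.exp (-(Qf a x * u ^ 2))) * Real.exp (-‖x‖ ^ 2)) =
      fun x => Real.exp (-∑ j, 1 * x j ^ 2) -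
        Real.exp (-∑ j, (1 + u ^ 2 / (a j) ^ 2) * x j ^ 2) := by
    ext x
    rw [sub_mul, one_mul, ← Real.exp_add, EuclideanSpace.real_norm_sq_eq]
    congr 2
    · simp
    · rw [Qf, Finset.sum_mul, ← neg_add, ← Finset.sum_add_distrib]
      congr 1
      exact Finset.sum_congr rfl fun j _ => by ring
  rw [h]
  refine ⟨i1.sub i2, ?_⟩
  rw [integral_sub i1 i2, e1, e2]
  simp
  ring

lemma key {n : ℕ} (a : Fin n → ℝ) (i : ℝ) (hi0 : -2 < i) (hin : i < 0) :
    -(1 / 2) * Real.Gamma (i / 2) *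
      ∫ x : EuclideanSpace ℝ (Fin n), Qf a x ^ (-i / 2) * Real.exp (-‖x‖ ^ 2) =
    -(Real.pi ^ ((n : ℝ) / 2) * ∫ u in Ioi (0 : ℝ),
          u ^ (i - 1) * ((∏ j, (1 + u ^ 2 / (a j) ^ 2)) ^ (-(1 : ℝ) / 2) - 1)) := by
  have hQ := (Qf_cont a).measurable
  have hG : 0 ≤ -(1 / 2) * Real.Gamma (i / 2) := by
    have h1 : Real.Gamma (i / 2 + 1) = i / 2 * Real.Gamma (i / 2) :=
      Real.Gamma_add_one (by linarith)
    have h2 : 0 < Real.Gamma (i / 2 + 1) := Real.Gamma_pos_of_pos (by linarith)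
    by_contra! h
    nlinarith
  rw [← integral_const_mul, ← integral_const_mul, ← integral_neg,
    integral_eq_lintegral_of_nonneg_ae, integral_eq_lintegral_of_nonneg_ae]
  · congr 1
    have e1 : ∀ x : EuclideanSpace ℝ (Fin n),
        ENNReal.ofReal (-(1 / 2) * Real.Gamma (i / 2) *
          (Qf a x ^ (-i / 2) * Real.exp (-‖x‖ ^ 2))) =
        ∫⁻ u in Ioi (0 : ℝ), ENNReal.ofReal (u ^ (i - 1) * (1 - Real.exp (-(Qf a x * u ^ 2)))) *
          ENNReal.ofReal (Real.exp (-‖x‖ ^ 2)) := by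
      intro x
      rw [lintegral_mul_const _ (by fun_prop), aux_L1' i _ (Qf_nonneg a x) hi0 hin,
        ← ENNReal.ofReal_mul (mul_nonneg hG (Real.rpow_nonneg (Qf_nonneg a x) _))]
      ring_nf
    simp only [e1]
    rw [lintegral_lintegral_swap]
    · refine setLIntegral_congr_fun measurableSet_Ioi fun u hu => ?_
      have hu : (0 : ℝ) < u := hu
      obtain ⟨i1, e2⟩ := gauss_diff a u
      have hnn : ∀ x : EuclideanSpace ℝ (Fin n), 0 ≤ 1 - Real.exp (-(Qf a x * u ^ 2)) := by
        intro x
        rw [sub_nonneg, Real.exp_le_one_iff, neg_nonpos]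
        exact mul_nonneg (Qf_nonneg a x) (sq_nonneg u)
      have e3 : -(Real.pi ^ ((n : ℝ) / 2) *
            (u ^ (i - 1) * ((∏ j, (1 + u ^ 2 / (a j) ^ 2)) ^ (-(1 : ℝ) / 2) - 1))) =
          ∫ x : EuclideanSpace ℝ (Fin n), u ^ (i - 1) *
            ((1 - Real.exp (-(Qf a x * u ^ 2))) * Real.exp (-‖x‖ ^ 2)) := by
        rw [integral_const_mul, e2]; ring
      simp only [e3]
      rw [ofReal_integral_eq_lintegral_ofReal (i1.const_mul _)]
      · refine lintegral_congr fun x => ?_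
        rw [← ENNReal.ofReal_mul (mul_nonneg (by positivity) (hnn x)), mul_assoc]
      · exact Filter.Eventually.of_forall fun x =>
          mul_nonneg (by positivity) (mul_nonneg (hnn x) (Real.exp_pos _).le)
    · unfold Function.uncurry
      fun_prop
  · filter_upwards [ae_restrict_mem measurableSet_Ioi] with u hu
    have hu : (0 : ℝ) < u := hu
    have h1 : (∏ j, (1 + u ^ 2 / (a j) ^ 2)) ^ (-(1 : ℝ) / 2) ≤ 1 := by
      apply Real.rpow_le_one_of_one_le_of_nonpos _ (by norm_num)
      refine Finset.prod_induction _ (fun z : ℝ => 1 ≤ z) (fun _ _ => one_le_mul_of_one_le_of_one_le) le_rfl fun j _ => ?_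
      have : 0 ≤ u ^ 2 / (a j) ^ 2 := by positivity
      linarith
    simp only [Pi.zero_apply]
    rw [← mul_neg, ← mul_neg, neg_sub]
    exact mul_nonneg (by positivity) (mul_nonneg (by positivity) (sub_nonneg.2 h1))
  · apply Measurable.aestronglyMeasurable
    fun_prop
  · exact Filter.Eventually.of_forall fun x =>
      mul_nonneg hG (mul_nonneg (Real.rpow_nonneg (Qf_nonneg a x) _) (Real.exp_pos _).le)
  · apply Measurable.aestronglyMeasurable
    fun_prop

/-- Moment representation of the dual volume `Ṽ_i` of a centered ellipsoid, for `-2 < i < 0`.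
Here `Real.Gamma` is the Gamma function extended to negative non-integer arguments by the
recursion `Γ(z) = Γ(z+1)/z`. -/
theorem dualVolume_moment_formula_neg
    (n : ℕ) (hn : 0 < n) (a : Fin n → ℝ) (ha : ∀ j, 0 < a j)
    (i : ℝ) (hi0 : -2 < i) (hin : i < 0) :
    dualVolume n i (ellipsoidSet a) =
      4 * Real.pi ^ ((n : ℝ) / 2) /
          (n * Real.Gamma (((n : ℝ) - i) / 2) * Real.Gamma (i / 2)) *
        ∫ u in Ioi (0 : ℝ),
          u ^ (i - 1) * ((∏ j, (1 + u ^ 2 / (a j) ^ 2)) ^ (-(1 : ℝ) / 2) - 1) := by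
  have hk := key a i hi0 hin
  rw [polar_s3 hn a (-i) (by linarith)] at hk
  have hS : ∫ θ : Metric.sphere (0 : EuclideanSpace ℝ (Fin n)) 1,
      radial (ellipsoidSet a) (θ : EuclideanSpace ℝ (Fin n)) ^ i ∂(sphereMeasure n) =
      ∫ θ : Metric.sphere (0 : EuclideanSpace ℝ (Fin n)) 1, Qf a θ ^ (-i / 2)
        ∂(sphereMeasure n) := by
    refine integral_congr_ae (Filter.Eventually.of_forall fun θ => ?_)
    simp only
    rw [radial_eq a ha _ (ne_zero_of_mem_unit_sphere θ), ← Real.rpow_mul (Qf_nonneg _ _)]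
    congr 1
    ring
  rw [dualVolume, hS]
  have hn' : (n : ℝ) ≠ 0 := by positivity
  have hG1 : Real.Gamma (((n : ℝ) - i) / 2) ≠ 0 :=
    (Real.Gamma_pos_of_pos (by have : (0 : ℝ) < n := by exact_mod_cast hn
                               linarith)).ne'
  have hG2 : Real.Gamma (i / 2) ≠ 0 := by
    intro h0
    have h1 : Real.Gamma (i / 2 + 1) = i / 2 * Real.Gamma (i / 2) :=
      Real.Gamma_add_one (by linarith)
    have h2 : 0 < Real.Gamma (i / 2 + 1) := Real.Gamma_pos_of_pos (by linarith)
    rw [h1, h0, mul_zero] at h2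
    exact lt_irrefl _ h2
  rw [show (n : ℝ) + -i = n - i by ring] at hk
  generalize (∫ θ : Metric.sphere (0 : EuclideanSpace ℝ (Fin n)) 1, Qf a θ ^ (-i / 2)
        ∂(sphereMeasure n)) = S at hk ⊢
  generalize (∫ u in Ioi (0 : ℝ),
          u ^ (i - 1) * ((∏ j, (1 + u ^ 2 / (a j) ^ 2)) ^ (-(1 : ℝ) / 2) - 1)) = T at hk ⊢
  field_simp
  linarith
end
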